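/- arXiv:2204.12609 — 9 statements merged into one kernel-verified Lean document; each statement's English description precedes it below -/
import Mathlib

section
/- Let q ≥ 1 and let k_1, …, k_q be integers with k_i ≥ 3 for all i and k_1 + ⋯ + k_q = n. Then Σ_{i=1}^{q} (k_i mod 3) ≤ 2⌈n/5⌉. -/
/-- Let `q ≥ 1` and let `k 1, …, k q` be integers with `k i ≥ 3` for all `i`
and `k 1 + ⋯ + k q = n`. Then `Σ (k i mod 3) ≤ 2⌈n/5⌉`. -/
theorem sum_mod_three_le_two_ceil_n_div_five (q n : ℕ) (hq : 1 ≤ q) (k : Fin q → ℕ)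
    (h3 : ∀ i, 3 ≤ k i) (hsum : ∑ i, k i = n) :
    ((∑ i, k i % 3 : ℕ) : ℤ) ≤ 2 * ⌈(n : ℚ) / 5⌉ := by
  have h1 : 5 * ∑ i, k i % 3 ≤ 2 * n := by
    rw [← hsum, Finset.mul_sum, Finset.mul_sum]
    refine Finset.sum_le_sum fun i _ => ?_
    have := h3 i
    omega
  have h2 : (n : ℚ) / 5 ≤ ⌈(n : ℚ) / 5⌉ := Int.le_ceil _
  have h3 : (n : ℚ) ≤ 5 * ⌈(n : ℚ) / 5⌉ := by linarith
  have h4 : (n : ℤ) ≤ 5 * ⌈(n : ℚ) / 5⌉ := by exact_mod_cast h3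
  omega
end

section
/- Let n ≥ 3. Among all finite multisets K = {k_1, …, k_q} of integers with every k_i ≥ 3 and Σ k_i = n, the function l(K) = Σ_i (k_i mod 3) attains its maximum at some multiset containing at least ⌊n/5⌋ − 1 elements equal to 5. -/
theorem bound_aux (K : Multiset ℕ) : (∀ k ∈ K, 3 ≤ k) →
    5 * (K.map (· % 3)).sum ≤ 2 * K.sum ∧ (K.map (· % 3)).sum % 3 = K.sum % 3 := by
  induction K using Multiset.induction_on with
  | empty => simp
  | cons a s ih =>
    intro h
    have h1 := h a (Multiset.mem_cons_self a s)
    have h2 := ih (fun k hk => h k (Multiset.mem_cons_of_mem hk))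
    simp only [Multiset.map_cons, Multiset.sum_cons]
    omega

/-- for `n ≥ 3`, among all finite multisets `K` of integers `≥ 3` summing
to `n`, the function `l(K) = Σ (k mod 3)` attains its maximum at some multiset containing
at least `⌊n/5⌋ - 1` elements equal to `5`. -/
theorem exists_max_sum_mod_three_with_many_fives (n : ℕ) (hn : 3 ≤ n) :
    ∃ K : Multiset ℕ, (∀ k ∈ K, 3 ≤ k) ∧ K.sum = n ∧
      (∀ K' : Multiset ℕ, (∀ k ∈ K', 3 ≤ k) → K'.sum = n →
        (K'.map (· % 3)).sum ≤ (K.map (· % 3)).sum) ∧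
      (n : ℤ) / 5 - 1 ≤ (K.count 5 : ℤ) := by
  refine ⟨(3 + (n - 3) % 5) ::ₘ Multiset.replicate ((n - 3) / 5) 5, ?_, ?_, ?_, ?_⟩
  · intro k hk
    rcases Multiset.mem_cons.1 hk with h | h
    · omega
    · have := Multiset.eq_of_mem_replicate h
      omega
  · simp only [Multiset.sum_cons, Multiset.sum_replicate, smul_eq_mul]
    omega
  · intro K' h hs
    have := bound_aux K' h
    simp only [Multiset.map_cons, Multiset.map_replicate, Multiset.sum_cons,
      Multiset.sum_replicate, smul_eq_mul]
    omega
  · have h : (n - 3) / 5 ≤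
        ((3 + (n - 3) % 5) ::ₘ Multiset.replicate ((n - 3) / 5) 5).count 5 := by
      refine le_trans ?_ (Multiset.count_le_count_cons _ _ _)
      rw [Multiset.count_replicate_self]
    omega
end

section
/- Let q ≥ 1 and let k_1, …, k_q be integers with k_i ≥ 3 for all i and k_1 + ⋯ + k_q = n. Then Σ_{i=1}^{q} ⌊k_i/3⌋ ≥ ⌈(n − 2⌈n/5⌉)/3⌉. -/
/-- Let `q ≥ 1` and let `k 1, …, k q` be integers with `k i ≥ 3` for all `i`
and `k 1 + ⋯ + k q = n`. Then `Σ ⌊k i / 3⌋ ≥ ⌈(n - 2⌈n/5⌉)/3⌉`. -/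
theorem sum_div_three_ge (q n : ℕ) (hq : 1 ≤ q) (k : Fin q → ℕ)
    (h3 : ∀ i, 3 ≤ k i) (hsum : ∑ i, k i = n) :
    ⌈((n : ℚ) - 2 * (⌈(n : ℚ) / 5⌉ : ℚ)) / 3⌉ ≤ ((∑ i, k i / 3 : ℕ) : ℤ) := by
  have h5 : n ≤ 5 * ∑ i, k i / 3 := by
    rw [← hsum, Finset.mul_sum]
    apply Finset.sum_le_sum
    intro i _
    have := h3 i
    omega
  generalize (∑ i, k i / 3) = S at h5 ⊢
  have h5q : (n : ℚ) ≤ 5 * (S : ℚ) := by exact_mod_cast h5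
  have hc : (n : ℚ) / 5 ≤ (⌈(n : ℚ) / 5⌉ : ℚ) := Int.le_ceil _
  have hcS : ⌈(n : ℚ) / 5⌉ ≤ (S : ℤ) := by
    rw [Int.ceil_le]
    push_cast
    linarith
  have hcSq : (⌈(n : ℚ) / 5⌉ : ℚ) ≤ (S : ℚ) := by exact_mod_cast hcS
  rw [Int.ceil_le]
  push_cast
  linarith
end

section
/- Let G be a finite simple graph on n vertices and let F be a 2-factor of G. Then there exists a spanning subgraph H of F (obtained from F by deleting edges only) such that every connected component of H contains at least 3 vertices and H has at least ⌈(n − 2⌈n/5⌉)/3⌉ connected components. -/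
open SimpleGraph

/-- A 2-factor of a simple graph `G`: a spanning subgraph in which every vertex has
degree exactly 2. -/
def IsTwoFactor {V : Type*} {G : SimpleGraph V} (F : G.Subgraph) : Prop :=
  F.IsSpanning ∧ ∀ v : V, (F.neighborSet v).ncard = 2

/-- Each component of a graph of cycles can be enumerated along a path. -/
lemma exists_enum {V : Type*} [Finite V] (K : SimpleGraph V)
    (hK : ∀ v, (K.neighborSet v).ncard = 2) (c : K.ConnectedComponent) :
    ∃ (L : ℕ) (P : ℕ → V), 3 ≤ L ∧ (∀ i < L, ∀ j < L, P i = P j → i = j) ∧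
      (∀ v, v ∈ c.supp ↔ ∃ i < L, P i = v) ∧ (∀ i, i + 1 < L → K.Adj (P i) (P (i + 1))) := by
  obtain ⟨v, hv⟩ := c.nonempty_supp
  have hcyc : K.IsCycles := fun v _ => hK v
  have hne : (K.neighborSet v).Nonempty := by
    apply Set.nonempty_of_ncard_ne_zero
    rw [hK v]; norm_num
  obtain ⟨p, hp, hs⟩ := hcyc.exists_cycle_toSubgraph_verts_eq_connectedComponentSupp hv hne
  have h3 := hp.three_le_length
  refine ⟨p.length, p.getVert, h3, ?_, ?_, ?_⟩
  · intro i hi j hj hij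
    exact hp.getVert_injOn' (by simp only [Set.mem_ofPred_eq]; omega)
      (by simp only [Set.mem_ofPred_eq]; omega) hij
  · intro w
    rw [← hs, Walk.mem_verts_toSubgraph, Walk.mem_support_iff_exists_getVert]
    constructor
    · rintro ⟨i, hi, hil⟩
      rcases hil.lt_or_eq with h | h
      · exact ⟨i, h, hi⟩
      · refine ⟨0, by omega, ?_⟩
        rw [← hi, h]; simp
    · rintro ⟨i, hi, hiw⟩
      exact ⟨i, hiw, hi.le⟩
  · intro i hi
    exact p.adj_getVert_succ (by omega)

lemma arith_bound {ι : Type*} [Fintype ι] (L : ι → ℕ) (hL : ∀ c, 3 ≤ L c) (n : ℕ)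
    (hn : n = ∑ c, L c) :
    ⌈((n : ℚ) - 2 * (⌈(n : ℚ) / 5⌉ : ℚ)) / 3⌉ ≤ ((∑ c, L c / 3 : ℕ) : ℤ) := by
  have h1 : n * 3 ≤ 15 * ∑ c, L c / 3 := by
    rw [hn, Finset.sum_mul, Finset.mul_sum]
    apply Finset.sum_le_sum
    intro c _
    have := hL c
    omega
  rw [Int.ceil_le]
  have h2 : (n : ℚ) / 5 ≤ (⌈(n : ℚ) / 5⌉ : ℚ) := Int.le_ceil _
  have h3 : (n : ℚ) * 3 ≤ 15 * ((∑ c, L c / 3 : ℕ) : ℚ) := by exact_mod_cast h1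
  rw [Int.cast_natCast]
  linarith

/-- any 2-factor `F` of a finite simple graph `G` on `n` vertices has a
spanning subgraph `H` (obtained by deleting edges only) all of whose connected components
have at least 3 vertices, with at least `⌈(n - 2⌈n/5⌉)/3⌉` connected components. -/
theorem twoFactor_split_into_components {V : Type*} [Fintype V] (G : SimpleGraph V) (n : ℕ)
    (hn : Fintype.card V = n) (F : G.Subgraph) (hF : IsTwoFactor F) :
    ∃ H : G.Subgraph, H ≤ F ∧ H.verts = F.verts ∧
      (∀ C : H.coe.ConnectedComponent, 3 ≤ Nat.card C.supp) ∧
      ⌈((n : ℚ) - 2 * (⌈(n : ℚ) / 5⌉ : ℚ)) / 3⌉ ≤ (Nat.card H.coe.ConnectedComponent : ℤ) := by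
  classical
  obtain ⟨hsp, hdeg⟩ := hF
  have hK : ∀ v, (F.spanningCoe.neighborSet v).ncard = 2 := hdeg
  choose L P hL hinj hsupp hadj using exists_enum F.spanningCoe hK
  have hbij : Function.Bijective
      (fun x : (Σ c : F.spanningCoe.ConnectedComponent, Fin (L c)) => P x.1 x.2) := by
    constructor
    · rintro ⟨c, i⟩ ⟨d, j⟩ h
      simp only at h
      have h1 : P c i ∈ c.supp := (hsupp c _).2 ⟨i, i.2, rfl⟩
      have h2 : P d j ∈ d.supp := (hsupp d _).2 ⟨j, j.2, rfl⟩
      rw [ConnectedComponent.mem_supp_iff] at h1 h2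
      have hcd : c = d := by rw [← h1, ← h2, h]
      subst hcd
      have : i = j := Fin.ext (hinj c i i.2 j j.2 h)
      rw [this]
    · intro v
      obtain ⟨i, hi, h⟩ := (hsupp (F.spanningCoe.connectedComponentMk v) v).1 rfl
      exact ⟨⟨_, ⟨i, hi⟩⟩, h⟩
  let e := Equiv.ofBijective _ hbij
  have he : ∀ c i (hi : i < L c), e.symm (P c i) = ⟨c, ⟨i, hi⟩⟩ := by
    intro c i hi
    rw [Equiv.symm_apply_eq]; rfl
  have hcard : n = ∑ c, L c := by
    rw [← hn, ← Fintype.card_congr e]; simp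
  let lab : V → F.spanningCoe.ConnectedComponent × ℕ :=
    fun v => ((e.symm v).1, min ((e.symm v).2.1 / 3) (L (e.symm v).1 / 3 - 1))
  have hlab : ∀ c i, i < L c → lab (P c i) = (c, min (i / 3) (L c / 3 - 1)) := by
    intro c i hi
    simp only [lab]
    rw [he c i hi]
  let H : G.Subgraph :=
    { verts := F.verts
      Adj := fun u v => F.Adj u v ∧ lab u = lab v
      adj_sub := fun h => F.adj_sub h.1
      edge_vert := fun h => F.edge_vert h.1
      symm := ⟨fun u v h => ⟨h.1.symm, h.2.symm⟩⟩ }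
  have hv : ∀ v, v ∈ H.verts := hsp
  let Q : F.spanningCoe.ConnectedComponent → ℕ → H.verts := fun c i => ⟨P c i, hv _⟩
  -- reachability inside a block
  have hreach : ∀ c j, j < L c / 3 → ∀ i, 3 * j ≤ i → i < L c →
      min (i / 3) (L c / 3 - 1) = j → H.coe.Reachable (Q c (3 * j)) (Q c i) := by
    intro c j hj i hi
    induction i, hi using Nat.le_induction with
    | base => intro _ _; exact Reachable.refl _
    | succ i hi ih =>
      intro hiL hij
      have hij' : min (i / 3) (L c / 3 - 1) = j := by omega
      refine (ih (by omega) hij').trans (Adj.reachable ?_)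
      refine ⟨hadj c i hiL, ?_⟩
      simp only [Q]
      rw [hlab c i (by omega), hlab c (i + 1) hiL, hij, hij']
  refine ⟨H, ⟨le_rfl, fun u v h => h.1⟩, rfl, ?_, ?_⟩
  · intro C
    induction C using ConnectedComponent.ind with | _ v =>
    obtain ⟨⟨c, i⟩, hci⟩ := hbij.2 v.1
    simp only at hci
    have hvQ : v = Q c i := Subtype.ext hci.symm
    have := hL c
    have hi := i.2
    obtain ⟨j, hj⟩ : ∃ j, min (i.1 / 3) (L c / 3 - 1) = j := ⟨_, rfl⟩
    have hjL : j < L c / 3 := by omega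
    have hvr := hreach c j hjL i.1 (by omega) hi hj
    rw [← hvQ] at hvr
    have hmem : ∀ k : Fin 3, Q c (3 * j + k) ∈ (H.coe.connectedComponentMk v).supp := by
      intro k
      have hk := k.2
      rw [ConnectedComponent.mem_supp_iff, ConnectedComponent.eq]
      exact (hreach c j hjL (3 * j + k) (by omega) (by omega) (by omega)).symm.trans hvr
    have : Function.Injective
        (fun k : Fin 3 => (⟨_, hmem k⟩ : (H.coe.connectedComponentMk v).supp)) := by
      intro k l hkl
      have hk := k.2
      have hl := l.2
      have h1 : P c (3 * j + k) = P c (3 * j + l) := congrArg (fun x => x.1.1) hkl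
      have := hinj c _ (by omega) _ (by omega) h1
      exact Fin.ext (by omega)
    have h3 := Nat.card_le_card_of_injective _ this
    rwa [Nat.card_fin] at h3
  · refine (arith_bound L hL n hcard).trans ?_
    have hlr : ∀ u v, H.coe.Reachable u v → lab u.1 = lab v.1 := by
      rintro u v ⟨p⟩
      induction p with
      | nil => rfl
      | cons h _ ih => exact h.2.trans ih
    have hinj' : Function.Injective
        (fun x : (Σ c : F.spanningCoe.ConnectedComponent, Fin (L c / 3)) =>
          H.coe.connectedComponentMk (Q x.1 (3 * x.2))) := by
      rintro ⟨c, i⟩ ⟨d, j⟩ h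
      have hi := i.2
      have hj := j.2
      have h1 := hlr _ _ (ConnectedComponent.exact h)
      simp only [Q] at h1
      rw [hlab c _ (by omega), hlab d _ (by omega), Prod.mk.injEq] at h1
      obtain ⟨rfl, h2⟩ := h1
      have : i = j := Fin.ext (by omega)
      rw [this]
    have := Nat.card_le_card_of_injective _ hinj'
    rw [Nat.card_eq_fintype_card] at this
    simp only [Fintype.card_sigma, Fintype.card_fin] at this
    exact_mod_cast this
end

section
/- Let G be a finite connected simple graph with real edge weights c, let T be a spanning tree of G of minimum total weight, let 1 ≤ p ≤ |V(G)|, and let T' be the forest obtained from T by deleting p − 1 edges of T of largest weight. Then T' is a spanning forest of G with exactly p connected components, and its total weight is minimum among all spanning forests of G with exactly p connected components. -/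
open SimpleGraph

/-- The total weight of a subgraph: the sum of the weights of its edges. -/
noncomputable def subgraphWeight {V : Type*} {G : SimpleGraph V} (c : Sym2 V → ℝ)
    (F : G.Subgraph) : ℝ :=
  ∑ᶠ e ∈ F.edgeSet, c e

/-- A forest satisfies `|E| + #components = |V|`. -/
theorem forest_card {V : Type*} [Fintype V] (F : SimpleGraph V) (hF : F.IsAcyclic) :
    F.edgeSet.ncard + Nat.card F.ConnectedComponent = Fintype.card V := by
  classical
  have h1 : ∀ C : F.ConnectedComponent, ∑ v : C, F.degree v + 2 = 2 * Fintype.card C := by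
    intro C
    have hT : C.toSimpleGraph.IsTree := hF.isTree_connectedComponent C
    have h2 := hT.card_edgeFinset
    have h3 := C.toSimpleGraph.sum_degrees_eq_twice_card_edges
    have h4 : ∀ v : C, C.toSimpleGraph.degree v = F.degree v := by
      intro v
      rw [← card_neighborSet_eq_degree, ← card_neighborSet_eq_degree]
      refine Fintype.card_congr
        ⟨fun w => ⟨w.1.1, w.2⟩, fun w => ⟨⟨w.1, ?_⟩, ?_⟩, fun w => rfl, fun w => rfl⟩
      · exact C.mem_supp_of_adj_mem_supp v.2 w.2
      · exact w.2
    rw [Finset.sum_congr rfl (fun v _ => (h4 v).symm), h3, ← h2]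
    ring
  have hd := F.sum_degrees_eq_twice_card_edges
  have hs : ∑ v : V, F.degree v = ∑ C : F.ConnectedComponent, ∑ v : C, F.degree v := by
    rw [← (Equiv.sigmaFiberEquiv F.connectedComponentMk).sum_comp, Fintype.sum_sigma]
    rfl
  have hc : Fintype.card V = ∑ C : F.ConnectedComponent, Fintype.card C := by
    rw [← Fintype.card_congr (Equiv.sigmaFiberEquiv F.connectedComponentMk), Fintype.card_sigma]
    rfl
  have hsum : ∑ C : F.ConnectedComponent, (∑ v : C, F.degree v + 2)
      = ∑ C : F.ConnectedComponent, 2 * Fintype.card C := Finset.sum_congr rfl fun C _ => h1 C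
  rw [Finset.sum_add_distrib, ← hs, ← Finset.mul_sum, ← hc, hd] at hsum
  have hE : F.edgeSet.ncard = F.edgeFinset.card := by
    rw [← coe_edgeFinset, Set.ncard_coe_finset]
  rw [hE, Nat.card_eq_fintype_card]
  simp at hsum
  omega

theorem sum_le_of_card_eq {α : Type*} (c : α → ℝ) (s t : Finset α) (h : s.card = t.card)
    (hc : ∀ a ∈ s, ∀ b ∈ t, c a ≤ c b) : ∑ a ∈ s, c a ≤ ∑ b ∈ t, c b := by
  rcases t.eq_empty_or_nonempty with rfl | ht
  · simp at h; simp [h]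
  · obtain ⟨m, hm, hmin⟩ := t.exists_min_image c ht
    have h1 := Finset.sum_le_card_nsmul s c (c m) fun a ha => hc a ha m hm
    have h2 := Finset.card_nsmul_le_sum t c (c m) hmin
    rw [h] at h1
    exact h1.trans h2

/-- if `T` is a minimum-weight spanning tree of a finite connected graph
`G` and `T'` is obtained from `T` by deleting `p - 1` edges of largest weight
(`1 ≤ p ≤ |V(G)|`), then `T'` is a spanning forest of `G` with exactly `p` connected
components of minimum total weight among all such spanning forests. -/
theorem mst_delete_heaviest_edges {V : Type*} [Fintype V] (G : SimpleGraph V)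
    (hG : G.Connected) (c : Sym2 V → ℝ) (T : G.Subgraph)
    (hTspan : T.IsSpanning) (hTtree : T.coe.IsTree)
    (hTmin : ∀ T₀ : G.Subgraph, T₀.IsSpanning → T₀.coe.IsTree →
      subgraphWeight c T ≤ subgraphWeight c T₀)
    (p : ℕ) (hp1 : 1 ≤ p) (hpn : p ≤ Fintype.card V)
    (D : Set (Sym2 V)) (hDsub : D ⊆ T.edgeSet) (hDcard : D.ncard = p - 1)
    (hDmax : ∀ e ∈ D, ∀ f ∈ T.edgeSet \ D, c f ≤ c e) :
    (T.deleteEdges D).IsSpanning ∧ (T.deleteEdges D).coe.IsAcyclic ∧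
      Nat.card (T.deleteEdges D).coe.ConnectedComponent = p ∧
      ∀ T' : G.Subgraph, T'.IsSpanning → T'.coe.IsAcyclic →
        Nat.card T'.coe.ConnectedComponent = p →
        subgraphWeight c (T.deleteEdges D) ≤ subgraphWeight c T' := by
  classical
  have hw : ∀ F : G.Subgraph, subgraphWeight c F = ∑ e ∈ F.edgeSet.toFinset, c e := by
    intro F
    rw [subgraphWeight, ← finsum_mem_coe_finset]
    simp
  have hcard : ∀ F : G.Subgraph, F.IsSpanning → F.coe.IsAcyclic →
      F.edgeSet.toFinset.card + Nat.card F.coe.ConnectedComponent = Fintype.card V := by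
    intro F hs ha
    have e := F.spanningCoeEquivCoeOfSpanning hs
    have := forest_card F.spanningCoe (e.isAcyclic_iff.2 ha)
    rwa [Subgraph.edgeSet_spanningCoe, Nat.card_congr e.connectedComponentEquiv,
      Set.ncard_eq_toFinset_card'] at this
  have hconn : ∀ F : G.Subgraph, F.coe.IsTree → Nat.card F.coe.ConnectedComponent = 1 := by
    intro F hF
    have := hF.connected.preconnected.subsingleton_connectedComponent
    have := hF.connected.nonempty
    exact Nat.card_unique
  have hdE : (T.deleteEdges D).edgeSet = T.edgeSet \ D := by
    ext e
    induction e with | _ u v => simp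
  have hD' : D.toFinset.card = p - 1 := by rw [← hDcard, Set.ncard_eq_toFinset_card']
  have hDs : D.toFinset ⊆ T.edgeSet.toFinset := by simpa using hDsub
  have hdF : (T.deleteEdges D).edgeSet.toFinset = T.edgeSet.toFinset \ D.toFinset := by
    ext e; simp [hdE]
  have hsp : (T.deleteEdges D).IsSpanning := fun v => hTspan v
  have hac : (T.deleteEdges D).coe.IsAcyclic :=
    hTtree.isAcyclic.anti (Subgraph.coe_deleteEdges_le D)
  have hTc := hcard T hTspan hTtree.isAcyclic
  rw [hconn T hTtree] at hTc
  refine ⟨hsp, hac, ?_, ?_⟩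
  · have h1 := hcard _ hsp hac
    rw [hdF, Finset.card_sdiff_of_subset hDs] at h1
    have := Finset.card_le_card hDs
    omega
  · intro F hFs hFa hFp
    have hTs : T.spanningCoe.IsTree := (T.spanningCoeEquivCoeOfSpanning hTspan).isTree_iff.2 hTtree
    have hFs' : F.spanningCoe.IsAcyclic :=
      (F.spanningCoeEquivCoeOfSpanning hFs).isAcyclic_iff.2 hFa
    have hco : (F.spanningCoe ⊔ T.spanningCoe).Connected := hTs.connected.mono le_sup_right
    obtain ⟨H, hFH, hHle, hH⟩ := hco.exists_isTree_le_of_le_of_isAcyclic le_sup_left hFs'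
    have hHG : H ≤ G := hHle.trans (sup_le F.spanningCoe_le T.spanningCoe_le)
    let S : G.Subgraph := toSubgraph H hHG
    have hSs : S.IsSpanning := toSubgraph.isSpanning H hHG
    have hSH : S.spanningCoe = H := rfl
    have hSt : S.coe.IsTree := (S.spanningCoeEquivCoeOfSpanning hSs).isTree_iff.1 (hSH ▸ hH)
    have hmin := hTmin S hSs hSt
    have hSc := hcard S hSs hSt.isAcyclic
    rw [hconn S hSt] at hSc
    have hFc := hcard F hFs hFa
    have hSE : S.edgeSet = H.edgeSet := by rw [← Subgraph.edgeSet_spanningCoe, hSH]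
    have hFS : F.edgeSet.toFinset ⊆ S.edgeSet.toFinset := by
      rw [Set.toFinset_subset_toFinset, hSE, ← Subgraph.edgeSet_spanningCoe]
      exact edgeSet_mono hFH
    have hAT : S.edgeSet.toFinset \ F.edgeSet.toFinset ⊆ T.edgeSet.toFinset := by
      intro e he
      simp only [Finset.mem_sdiff, Set.mem_toFinset, hSE] at he ⊢
      have := edgeSet_mono hHle he.1
      rw [edgeSet_sup, Subgraph.edgeSet_spanningCoe, Subgraph.edgeSet_spanningCoe] at this
      exact this.resolve_left he.2
    set A := S.edgeSet.toFinset \ F.edgeSet.toFinset with hA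
    have hAc : A.card = D.toFinset.card := by
      rw [hA, Finset.card_sdiff_of_subset hFS]
      omega
    have hAD : ∑ e ∈ A, c e ≤ ∑ e ∈ D.toFinset, c e := by
      have h1 : (A \ D.toFinset).card = (D.toFinset \ A).card :=
        Finset.card_sdiff_comm hAc
      have h2 := sum_le_of_card_eq c _ _ h1 (by
        intro a ha b hb
        simp only [Finset.mem_sdiff] at ha hb
        refine hDmax b (by simpa using hb.1) a ⟨?_, by simpa using ha.2⟩
        simpa using hAT ha.1)
      have h3 := Finset.sum_inter_add_sum_sdiff A D.toFinset c
      have h4 := Finset.sum_inter_add_sum_sdiff D.toFinset A c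
      rw [Finset.inter_comm] at h4
      linarith
    have h5 := Finset.sum_sdiff (f := c) hFS
    have h6 := Finset.sum_sdiff (f := c) hDs
    rw [hw, hw] at hmin
    rw [hw, hw, hdF]
    linarith
end

section
/- Let K_V be the complete graph on a finite vertex set V with nonnegative edge weights c satisfying the triangle inequality, let S ⊆ V with |S| ≥ 3, and let W be a closed walk in K_V that uses only vertices of S and visits every vertex of S at least once. Then there exists a cycle in K_V whose vertex set is exactly S and whose total weight is at most the total weight of W, where edges of W are counted with multiplicity. -/
open SimpleGraph

noncomputable def scD {V : Type*} (c : Sym2 V → ℝ) (a b : V) : ℝ :=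
  open Classical in if a = b then 0 else c s(a, b)

noncomputable def scW {V : Type*} (c : Sym2 V → ℝ) : V → List V → V → ℝ
  | a, [], b => scD c a b
  | a, x :: l, b => scD c a x + scW c x l b

lemma scD_tri {V : Type*} (c : Sym2 V → ℝ) (hc : ∀ e, 0 ≤ c e)
    (htri : ∀ u v x : V, u ≠ v → v ≠ x → u ≠ x → c s(u, x) ≤ c s(u, v) + c s(v, x))
    (a b d : V) : scD c a d ≤ scD c a b + scD c b d := by
  unfold scD
  by_cases h1 : a = b
  · subst h1; simp
  by_cases h2 : b = d
  · subst h2; simp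
  by_cases h3 : a = d
  · subst h3; simp [h1, h2]; linarith [hc s(a, b), hc s(b, a)]
  simp [h1, h2, h3, htri a b d h1 h2 h3]

lemma scW_tri {V : Type*} (c : Sym2 V → ℝ) (hc : ∀ e, 0 ≤ c e)
    (htri : ∀ u v x : V, u ≠ v → v ≠ x → u ≠ x → c s(u, x) ≤ c s(u, v) + c s(v, x))
    (a x b : V) (l : List V) : scW c a l b ≤ scD c a x + scW c x l b := by
  cases l with
  | nil => exact scD_tri c hc htri a x b
  | cons y l => simp only [scW]; linarith [scD_tri c hc htri a x y]

lemma scW_sub {V : Type*} (c : Sym2 V → ℝ) (hc : ∀ e, 0 ≤ c e)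
    (htri : ∀ u v x : V, u ≠ v → v ≠ x → u ≠ x → c s(u, x) ≤ c s(u, v) + c s(v, x))
    (b : V) (l l' : List V) (h : l'.Sublist l) :
    ∀ a, scW c a l' b ≤ scW c a l b := by
  induction h with
  | slnil => intro a; exact le_rfl
  | cons x _ ih => 
    intro a
    simp only [scW]
    exact (scW_tri c hc htri a x b _).trans (by linarith [ih x])
  | cons_cons x _ ih => intro a; simp only [scW]; linarith [ih x]

lemma sc_of_walk {V : Type*} (c : Sym2 V → ℝ) {a b : V} (p : (⊤ : SimpleGraph V).Walk a b) :
    p.length = 0 ∨ ∃ l, p.support = a :: (l ++ [b]) ∧ scW c a l b = (p.edges.map c).sum := by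
  induction p with
  | nil => simp
  | @cons u v w h p ih =>
    right
    have hne : u ≠ v := by simpa using h
    cases p with
    | nil => exact ⟨[], by simp, by simp [scW, scD, hne]⟩
    | cons h' q =>
      rcases ih with ih | ⟨l, h1, h2⟩
      · simp at ih
      · refine ⟨v :: l, ?_, ?_⟩
        · rw [Walk.support_cons, h1]; simp
        · rw [Walk.edges_cons, List.map_cons, List.sum_cons, ← h2]
          simp [scW, scD, hne]

lemma sc_to_walk {V : Type*} (c : Sym2 V → ℝ) (b : V) (l : List V) :
    ∀ a, (a :: (l ++ [b])).Nodup → ∃ p : (⊤ : SimpleGraph V).Walk a b,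
      p.support = a :: (l ++ [b]) ∧ scW c a l b = (p.edges.map c).sum := by
  induction l with
  | nil =>
    intro a h
    have hne : a ≠ b := by simpa using h
    exact ⟨Walk.cons (by simpa using hne) Walk.nil, by simp, by simp [scW, scD, hne]⟩
  | cons x l ih =>
    intro a h
    obtain ⟨p, h1, h2⟩ := ih x (List.nodup_cons.1 h).2
    have hne : a ≠ x := by
      rintro rfl
      simp at h
    refine ⟨Walk.cons (by simpa using hne) p, by simp [h1], ?_⟩
    simp [scW, scD, hne, h2]

/-- in a complete graph with nonnegative weights satisfying the triangle
inequality, if a closed walk `w` uses only vertices of `S` (`|S| ≥ 3`) and visits every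
vertex of `S`, then there is a cycle with vertex set exactly `S` whose weight is at most
the weight of `w` (edges counted with multiplicity). -/
theorem shortcut_closed_walk {V : Type*} [Fintype V] (c : Sym2 V → ℝ)
    (hc : ∀ e, 0 ≤ c e)
    (htri : ∀ u v x : V, u ≠ v → v ≠ x → u ≠ x → c s(u, x) ≤ c s(u, v) + c s(v, x))
    (S : Set V) (hS : 3 ≤ S.ncard) (v : V) (w : (⊤ : SimpleGraph V).Walk v v)
    (hw : {x | x ∈ w.support} = S) :
    ∃ (u : V) (C : (⊤ : SimpleGraph V).Walk u u), C.IsCycle ∧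
      {x | x ∈ C.support} = S ∧ (C.edges.map c).sum ≤ (w.edges.map c).sum := by
  classical
  rcases sc_of_walk c w with h0 | ⟨l, h1, h2⟩
  · have hnil := (Walk.eq_nil_iff_nil).2 (Walk.length_eq_zero_iff.1 h0)
    subst hnil
    have : S = {v} := by rw [← hw]; ext; simp
    rw [this] at hS
    simp at hS
  obtain ⟨l', hl'⟩ : ∃ l', l' = (l.filter (· ≠ v)).dedup := ⟨_, rfl⟩
  have hsub : l'.Sublist l := hl' ▸ (List.dedup_sublist _).trans List.filter_sublist
  have hmem : ∀ x, x ∈ l' ↔ x ∈ l ∧ x ≠ v := by intro x; simp [hl']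
  have hnd : l'.Nodup := hl' ▸ List.nodup_dedup _
  have hle := scW_sub c hc htri v l l' hsub v
  have hSl : S = {x | x ∈ v :: l'} := by
    rw [← hw]; ext x
    simp only [Set.mem_ofPred_eq, h1, List.mem_cons, List.mem_append, hmem]
    simp only [List.not_mem_nil]
    tauto
  have hlen : 3 ≤ (v :: l').length := by
    have : S = ((v :: l').toFinset : Set V) := by rw [hSl]; ext; simp
    rw [this, Set.ncard_coe_finset] at hS
    exact hS.trans (List.toFinset_card_le _)
  match l', hlen with
  | x :: y :: t, _ =>
    have hv : v ∉ x :: y :: t := fun h => ((hmem v).1 h).2 rfl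
    have hnd' : (x :: ((y :: t) ++ [v])).Nodup := by
      have : (x :: y :: t ++ [v]).Nodup := by
        rw [List.nodup_append]
        refine ⟨hnd, by simp, ?_⟩
        rintro a ha b hb rfl
        simp at hb
        exact hv (hb ▸ ha)
      simpa using this
    obtain ⟨p, hp, hpw⟩ := sc_to_walk c v (y :: t) x hnd'
    have hvx : v ≠ x := fun h => hv (by simp [h])
    have hpath : p.IsPath := by rw [Walk.isPath_def, hp]; exact hnd'
    refine ⟨v, Walk.cons (by simpa using hvx) p, ?_, ?_, ?_⟩
    · rw [Walk.cons_isCycle_iff]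
      refine ⟨hpath, fun he => ?_⟩
      have h4 := hpath.length_eq_one_of_mem_edges (Sym2.eq_swap ▸ he)
      have h5 := p.length_support
      rw [hp, h4] at h5
      simp at h5
    · rw [hSl]; ext z; simp [hp]; tauto
    · rw [← h2]
      refine le_trans (le_of_eq ?_) hle
      simp only [Walk.edges_cons, List.map_cons, List.sum_cons, ← hpw]
      have h3 : scD c v x = c s(v, x) := by simp [scD, hvx]
      rw [← h3]
      rfl
end

section
/- Let K_V be the complete graph on a finite vertex set V with nonnegative edge weights c satisfying the triangle inequality. Let F be a 2-factor of K_V with q cycles and let T be a spanning forest of K_V with exactly p connected components, where 1 ≤ p ≤ q. Then there exists a Hamiltonian p-median solution of K_V with total weight at most c(F) + 2·c(T). -/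
open SimpleGraph

/-- A Hamiltonian `p`-median solution of `G`: a spanning subgraph with all degrees 2
and exactly `p` connected components (i.e. `p` vertex-disjoint cycles, each with at
least 3 vertices, whose vertex sets partition `V`). -/
def IsHpMedianSolution {V : Type*} {G : SimpleGraph V} (p : ℕ) (H : G.Subgraph) : Prop :=
  IsTwoFactor H ∧ Nat.card H.coe.ConnectedComponent = p

/-- Reachability is the least equivalence relation containing adjacency. -/
theorem reach_of_adj {V : Type*} (G : SimpleGraph V) (r : V → V → Prop) (hr : Equivalence r)
    (h : ∀ a b, G.Adj a b → r a b) {a b : V} (hab : G.Reachable a b) : r a b := by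
  obtain ⟨w⟩ := hab
  induction w with
  | nil => exact hr.refl _
  | cons hadj _ ih => exact hr.trans (h _ _ hadj) ih

theorem reach_equiv {V : Type*} (G : SimpleGraph V) : Equivalence G.Reachable :=
  G.reachable_is_equivalence

/-- In a 2-regular graph no edge is a bridge (local version). -/
theorem reach_delete {V : Type*} [Fintype V] (G D : SimpleGraph V)
    (h2 : ∀ v, (G.neighborSet v).ncard = 2) {u u' : V} (huu : G.Adj u u') (hDG : D ≤ G)
    (hD : ∀ x, G.Reachable u x → ∀ y, D.Adj x y ↔ G.Adj x y ∧ s(x, y) ≠ s(u, u')) :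
    D.Reachable u u' := by
  classical
  by_contra hn
  let K : SimpleGraph V :=
    { Adj := fun a b => D.Adj a b ∧ D.Reachable u a
      symm := ⟨fun a b h => ⟨h.1.symm, h.2.trans h.1.reachable⟩⟩
      loopless := ⟨fun a h => D.loopless.irrefl a h.1⟩ }
  have hne : u ≠ u' := huu.ne
  have hdeg : ∀ x, K.degree x = (K.neighborSet x).ncard := by
    intro x
    rw [Set.ncard_eq_toFinset_card', ← SimpleGraph.card_neighborFinset_eq_degree]
    rfl
  have hu : K.degree u = 1 := by
    rw [hdeg]
    have : K.neighborSet u = G.neighborSet u \ {u'} := by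
      ext y
      have := hD u (Reachable.refl u) y
      simp only [mem_neighborSet, Set.mem_sdiff, Set.mem_singleton_iff, K, this, Reachable.refl,
        and_true]
      have : s(u, y) = s(u, u') ↔ y = u' := by grind [Sym2.eq_iff]
      rw [Ne, this]
    rw [this, Set.ncard_sdiff_singleton_of_mem (show u' ∈ G.neighborSet u from huu), h2]
  obtain ⟨w, hw, hodd⟩ := K.exists_ne_odd_degree_of_exists_odd_degree u (by rw [hu]; exact odd_one)
  rw [hdeg] at hodd
  by_cases hr : D.Reachable u w
  · have hwu : w ≠ u' := by rintro rfl; exact hn hr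
    have : K.neighborSet w = G.neighborSet w := by
      ext y
      have := hD w (hr.mono hDG) y
      simp only [mem_neighborSet, K, this, hr, and_true, and_iff_left_iff_imp]
      intro _ h
      rw [Sym2.eq_iff] at h
      rcases h with h | h
      · exact hw h.1
      · exact hwu h.1
    rw [this, h2] at hodd
    exact absurd hodd (by decide)
  · have : K.neighborSet w = ∅ := by
      ext y
      simp [K, hr]
    rw [this] at hodd
    simp at hodd

/-- Merging two classes of components decreases the component count by one. -/
theorem card_cc_merge {V : Type*} [Fintype V] (G H : SimpleGraph V) (u v : V)
    (huv : ¬ G.Reachable u v)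
    (hGH : ∀ a b, G.Adj a b → H.Reachable a b) (hH : H.Reachable u v)
    (hHG : ∀ a b, H.Adj a b → G.Reachable a b ∨ (G.Reachable a u ∧ G.Reachable b v) ∨
      (G.Reachable a v ∧ G.Reachable b u)) :
    Nat.card H.ConnectedComponent + 1 = Nat.card G.ConnectedComponent := by
  classical
  have h1 : ∀ {a b}, G.Reachable a b → H.Reachable a b := fun h =>
    reach_of_adj G _ (reach_equiv H) hGH h
  have h2 : ∀ {a b}, H.Reachable a b → G.Reachable a b ∨ (G.Reachable a u ∧ G.Reachable b v) ∨
      (G.Reachable a v ∧ G.Reachable b u) := by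
    intro a b h
    refine reach_of_adj H (fun a b => G.Reachable a b ∨ (G.Reachable a u ∧ G.Reachable b v) ∨
      (G.Reachable a v ∧ G.Reachable b u)) ⟨?_, ?_, ?_⟩ hHG h
    · intro x; exact Or.inl (Reachable.refl x)
    · rintro x y (h | h | h)
      · exact Or.inl h.symm
      · exact Or.inr (Or.inr h.symm)
      · exact Or.inr (Or.inl h.symm)
    · rintro x y z (h | h | h) (k | k | k)
      · exact Or.inl (h.trans k)
      · exact Or.inr (Or.inl ⟨h.trans k.1, k.2⟩)
      · exact Or.inr (Or.inr ⟨h.trans k.1, k.2⟩)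
      · exact Or.inr (Or.inl ⟨h.1, k.symm.trans h.2⟩)
      · exact absurd (k.1.symm.trans h.2) huv
      · exact Or.inl (h.1.trans k.2.symm)
      · exact Or.inr (Or.inr ⟨h.1, k.symm.trans h.2⟩)
      · exact Or.inl (h.1.trans k.2.symm)
      · exact absurd (h.2.symm.trans k.1) huv
  let f : {C : G.ConnectedComponent // C ≠ G.connectedComponentMk v} → H.ConnectedComponent :=
    fun C => C.1.lift (fun x => H.connectedComponentMk x)
      (fun a b w _ => ConnectedComponent.eq.2 (h1 ⟨w⟩))
  have hf : Function.Bijective f := by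
    constructor
    · rintro ⟨C, hC⟩ ⟨C', hC'⟩ h
      induction C using ConnectedComponent.ind with | _ a
      induction C' using ConnectedComponent.ind with | _ b
      have hab : H.Reachable a b := ConnectedComponent.eq.1 h
      rw [Ne, ConnectedComponent.eq] at hC hC'
      rcases h2 hab with h | h | h
      · exact Subtype.ext (ConnectedComponent.eq.2 h)
      · exact absurd h.2 hC'
      · exact absurd h.1 hC
    · intro C
      induction C using ConnectedComponent.ind with | _ a
      by_cases ha : G.Reachable a v
      · exact ⟨⟨G.connectedComponentMk u, fun h => huv (ConnectedComponent.eq.1 h)⟩,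
          ConnectedComponent.eq.2 (hH.trans (h1 ha).symm)⟩
      · exact ⟨⟨G.connectedComponentMk a, fun h => ha (ConnectedComponent.eq.1 h)⟩, rfl⟩
  have hcard := Nat.card_congr (Equiv.ofBijective f hf)
  have := Set.ncard_add_ncard_compl ({G.connectedComponentMk v} : Set G.ConnectedComponent)
  rw [Set.ncard_singleton] at this
  have h3 : ({G.connectedComponentMk v}ᶜ : Set G.ConnectedComponent).ncard =
      Nat.card H.ConnectedComponent := hcard
  omega

theorem merge_step {V : Type*} [Fintype V] (c : Sym2 V → ℝ)
    (htri : ∀ u v x : V, u ≠ v → v ≠ x → u ≠ x → c s(u, x) ≤ c s(u, v) + c s(v, x))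
    (G : SimpleGraph V) (h2 : ∀ v, (G.neighborSet v).ncard = 2) (u v : V)
    (huv : ¬ G.Reachable u v) :
    ∃ H : SimpleGraph V, (∀ v, (H.neighborSet v).ncard = 2) ∧
      Nat.card H.ConnectedComponent + 1 = Nat.card G.ConnectedComponent ∧
      (∀ a b, G.Reachable a b → H.Reachable a b) ∧ H.Reachable u v ∧
      ∑ᶠ e ∈ H.edgeSet, c e ≤ ∑ᶠ e ∈ G.edgeSet, c e + 2 * c s(u, v) := by
  classical
  have hex : ∀ x, ∃ y, G.Adj x y := fun x =>
    (Set.nonempty_of_ncard_ne_zero (s := G.neighborSet x) (by rw [h2]; decide))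
  obtain ⟨u', hu⟩ := hex u
  obtain ⟨v', hv⟩ := hex v
  have n1 : ¬ G.Reachable u v' := fun h => huv (h.trans hv.symm.reachable)
  have n2 : ¬ G.Reachable u' v := fun h => huv (hu.reachable.trans h)
  have n3 : ¬ G.Reachable u' v' := fun h => n1 (hu.reachable.trans h)
  have ne : ∀ {a b}, ¬ G.Reachable a b → a ≠ b := fun h e => h (e ▸ Reachable.refl _)
  have na : ∀ {a b}, ¬ G.Reachable a b → ¬ G.Adj a b := fun h e => h e.reachable
  have e0 := ne huv
  have e1 := ne n1
  have e2 := ne n2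
  have e3 := ne n3
  have e4 := hu.ne
  have e5 := hv.ne
  let D : SimpleGraph V := G.deleteEdges {s(u, u'), s(v, v')}
  let H : SimpleGraph V := D ⊔ edge u v ⊔ edge u' v'
  have hDadj : ∀ a b, D.Adj a b ↔ G.Adj a b ∧ s(a, b) ≠ s(u, u') ∧ s(a, b) ≠ s(v, v') := by
    intro a b; simp [D, deleteEdges_adj]
  have hDG : D ≤ G := deleteEdges_le _
  have hDH : D ≤ H := le_sup_left.trans le_sup_left
  have hHadj : ∀ a b, H.Adj a b ↔ D.Adj a b ∨ s(a, b) = s(u, v) ∨ s(a, b) = s(u', v') := by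
    intro a b
    simp only [H, sup_adj, edge_adj, Sym2.eq_iff]
    grind
  have ru : D.Reachable u u' := by
    refine reach_delete G D h2 hu hDG fun x hx y => ?_
    rw [hDadj]
    refine ⟨fun h => ⟨h.1, h.2.1⟩, fun h => ⟨h.1, h.2, fun he => ?_⟩⟩
    rw [Sym2.eq_iff] at he
    rcases he with ⟨rfl, _⟩ | ⟨rfl, _⟩
    · exact huv hx
    · exact n1 hx
  have rv : D.Reachable v v' := by
    refine reach_delete G D h2 hv hDG fun x hx y => ?_
    rw [hDadj]
    refine ⟨fun h => ⟨h.1, h.2.2⟩, fun h => ⟨h.1, fun he => ?_, h.2⟩⟩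
    rw [Sym2.eq_iff] at he
    rcases he with ⟨rfl, _⟩ | ⟨rfl, _⟩
    · exact huv hx.symm
    · exact n2 hx.symm
  have hGH : ∀ a b, G.Adj a b → H.Reachable a b := by
    intro a b hab
    by_cases k1 : s(a, b) = s(u, u')
    · rw [Sym2.eq_iff] at k1
      rcases k1 with ⟨rfl, rfl⟩ | ⟨rfl, rfl⟩
      · exact ru.mono hDH
      · exact (ru.mono hDH).symm
    by_cases k2 : s(a, b) = s(v, v')
    · rw [Sym2.eq_iff] at k2
      rcases k2 with ⟨rfl, rfl⟩ | ⟨rfl, rfl⟩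
      · exact rv.mono hDH
      · exact (rv.mono hDH).symm
    exact (hDH ((hDadj a b).2 ⟨hab, k1, k2⟩)).reachable
  have hHuv : H.Reachable u v := ((hHadj u v).2 (Or.inr (Or.inl rfl))).reachable
  refine ⟨H, ?_, ?_, fun a b h => reach_of_adj G _ (reach_equiv H) hGH h, hHuv, ?_⟩
  · intro x
    have key : ∀ y z, ¬ G.Adj x y → G.Adj x z →
        H.neighborSet x = insert y (G.neighborSet x \ {z}) → (H.neighborSet x).ncard = 2 := by
      intro y z hy hz h
      rw [h, Set.ncard_exchange (by simpa using hy) (by simpa using hz), h2]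
    by_cases x1 : x = u
    · subst x1
      refine key v u' (na huv) hu ?_
      ext y
      simp only [mem_neighborSet, hHadj, hDadj, Sym2.eq_iff, Set.mem_insert_iff, Set.mem_sdiff,
        Set.mem_singleton_iff]
      grind
    by_cases x2 : x = u'
    · subst x2
      refine key v' u (na n3) hu.symm ?_
      ext y
      simp only [mem_neighborSet, hHadj, hDadj, Sym2.eq_iff, Set.mem_insert_iff, Set.mem_sdiff,
        Set.mem_singleton_iff]
      grind
    by_cases x3 : x = v
    · subst x3
      refine key u v' (fun h => na huv h.symm) hv ?_
      ext y
      simp only [mem_neighborSet, hHadj, hDadj, Sym2.eq_iff, Set.mem_insert_iff, Set.mem_sdiff,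
        Set.mem_singleton_iff]
      grind
    by_cases x4 : x = v'
    · subst x4
      refine key u' v (fun h => na n3 h.symm) hv.symm ?_
      ext y
      simp only [mem_neighborSet, hHadj, hDadj, Sym2.eq_iff, Set.mem_insert_iff, Set.mem_sdiff,
        Set.mem_singleton_iff]
      grind
    have : H.neighborSet x = G.neighborSet x := by
      ext y
      simp only [mem_neighborSet, hHadj, hDadj, Sym2.eq_iff]
      grind
    rw [this, h2]
  · refine card_cc_merge G H u v huv hGH hHuv ?_
    intro a b hab
    rcases (hHadj a b).1 hab with h | h | h
    · exact Or.inl (hDG h).reachable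
    · rw [Sym2.eq_iff] at h
      rcases h with ⟨rfl, rfl⟩ | ⟨rfl, rfl⟩
      · exact Or.inr (Or.inl ⟨Reachable.refl _, Reachable.refl _⟩)
      · exact Or.inr (Or.inr ⟨Reachable.refl _, Reachable.refl _⟩)
    · rw [Sym2.eq_iff] at h
      rcases h with ⟨rfl, rfl⟩ | ⟨rfl, rfl⟩
      · exact Or.inr (Or.inl ⟨hu.symm.reachable, hv.symm.reachable⟩)
      · exact Or.inr (Or.inr ⟨hv.symm.reachable, hu.symm.reachable⟩)
  · have hG : G.edgeSet = insert s(u, u') (insert s(v, v') D.edgeSet) := by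
      ext e
      induction e using Sym2.ind with | _ a b
      simp only [mem_edgeSet, Set.mem_insert_iff, hDadj]
      have k1 : s(a, b) = s(u, u') → G.Adj a b := fun h => by
        rw [← mem_edgeSet, h]; exact hu
      have k2 : s(a, b) = s(v, v') → G.Adj a b := fun h => by
        rw [← mem_edgeSet, h]; exact hv
      tauto
    have hH' : H.edgeSet = insert s(u, v) (insert s(u', v') D.edgeSet) := by
      ext e
      induction e using Sym2.ind with | _ a b
      simp only [mem_edgeSet, Set.mem_insert_iff, hHadj]
      tauto
    have fin : ∀ s : Set (Sym2 V), s.Finite := fun s => Set.toFinite s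
    rw [hG, hH', finsum_mem_insert _ _ (fin _), finsum_mem_insert _ _ (fin _),
      finsum_mem_insert _ _ (fin _), finsum_mem_insert _ _ (fin _)]
    · have t1 := htri u' u v' e4.symm e1 e3
      have t2 := htri u v v' e0 e5 e1
      rw [Sym2.eq_swap (a := u') (b := u)] at t1
      linarith
    · simp [hDadj]
    · simp only [Set.mem_insert_iff, mem_edgeSet, hDadj, Sym2.eq_iff]
      grind
    · intro h
      exact na n3 (hDG h)
    · simp only [Set.mem_insert_iff, mem_edgeSet, Sym2.eq_iff]
      have := fun h => na huv (hDG h)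
      grind

theorem exists_cross {V : Type*} [Fintype V] (G T : SimpleGraph V)
    (h : Nat.card T.ConnectedComponent < Nat.card G.ConnectedComponent) :
    ∃ u v, T.Adj u v ∧ ¬ G.Reachable u v := by
  classical
  by_contra! hn
  let f : T.ConnectedComponent → G.ConnectedComponent :=
    fun C => C.lift (fun x => G.connectedComponentMk x)
      (fun a b w _ => ConnectedComponent.eq.2 (reach_of_adj T _ (reach_equiv G) hn ⟨w⟩))
  have hf : Function.Surjective f := by
    intro C
    induction C using ConnectedComponent.ind with | _ a
    exact ⟨T.connectedComponentMk a, rfl⟩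
  exact absurd (Nat.card_le_card_of_surjective f hf) (not_le.2 h)

theorem merge_all {V : Type*} [Fintype V] (c : Sym2 V → ℝ)
    (htri : ∀ u v x : V, u ≠ v → v ≠ x → u ≠ x → c s(u, x) ≤ c s(u, v) + c s(v, x))
    (F T : SimpleGraph V) (h2 : ∀ v, (F.neighborSet v).ncard = 2) (n : ℕ)
    (hn : Nat.card F.ConnectedComponent = Nat.card T.ConnectedComponent + n) :
    ∀ k ≤ n, ∃ (H : SimpleGraph V) (S : Set (Sym2 V)), (∀ v, (H.neighborSet v).ncard = 2) ∧
      Nat.card H.ConnectedComponent + k = Nat.card F.ConnectedComponent ∧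
      S ⊆ T.edgeSet ∧ (∀ a b, s(a, b) ∈ S → H.Reachable a b) ∧
      ∑ᶠ e ∈ H.edgeSet, c e ≤ ∑ᶠ e ∈ F.edgeSet, c e + 2 * ∑ᶠ e ∈ S, c e := by
  intro k
  induction k with
  | zero => exact fun _ => ⟨F, ∅, h2, rfl, Set.empty_subset _, by simp, by simp⟩
  | succ k ih =>
    intro hk
    obtain ⟨H, S, hH2, hcard, hST, hS, hw⟩ := ih (by omega)
    obtain ⟨u, v, huv, hr⟩ := exists_cross H T (by omega)
    obtain ⟨H', h1, h2', h3, h4, h5⟩ := merge_step c htri H hH2 u v hr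
    refine ⟨H', insert s(u, v) S, h1, by omega, Set.insert_subset huv hST, ?_, ?_⟩
    · intro a b hab
      rcases hab with hab | hab
      · rw [Sym2.eq_iff] at hab
        rcases hab with ⟨rfl, rfl⟩ | ⟨rfl, rfl⟩
        · exact h4
        · exact h4.symm
      · exact h3 _ _ (hS _ _ hab)
    · rw [finsum_mem_insert _ (fun h => hr (hS _ _ h)) (Set.toFinite _)]
      linarith

/-- in a complete graph with nonnegative weights satisfying the triangle
inequality, given a 2-factor `F` with `q` cycles and a spanning forest `T` with exactly
`p` components, `1 ≤ p ≤ q`, there is a Hamiltonian `p`-median solution of weight at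
most `c(F) + 2c(T)`. -/
theorem merge_case_q_gt_p {V : Type*} [Fintype V] (c : Sym2 V → ℝ)
    (hc : ∀ e, 0 ≤ c e)
    (htri : ∀ u v x : V, u ≠ v → v ≠ x → u ≠ x → c s(u, x) ≤ c s(u, v) + c s(v, x))
    (F T : (⊤ : SimpleGraph V).Subgraph) (q p : ℕ)
    (hF : IsTwoFactor F) (hFq : Nat.card F.coe.ConnectedComponent = q)
    (hTspan : T.IsSpanning) (hTacyc : T.coe.IsAcyclic)
    (hTp : Nat.card T.coe.ConnectedComponent = p)
    (hp1 : 1 ≤ p) (hpq : p ≤ q) :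
    ∃ H : (⊤ : SimpleGraph V).Subgraph, IsHpMedianSolution p H ∧
      subgraphWeight c H ≤ subgraphWeight c F + 2 * subgraphWeight c T := by
  have cardF := Nat.card_congr (F.spanningCoeEquivCoeOfSpanning hF.1).connectedComponentEquiv
  have cardT := Nat.card_congr (T.spanningCoeEquivCoeOfSpanning hTspan).connectedComponentEquiv
  obtain ⟨H, S, h1, h2, h3, -, h5⟩ := merge_all c htri F.spanningCoe T.spanningCoe
    (fun v => hF.2 v) (q - p) (by omega) (q - p) le_rfl
  let H' : (⊤ : SimpleGraph V).Subgraph := toSubgraph H le_top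
  have hs : H'.IsSpanning := toSubgraph.isSpanning H le_top
  have hsc : H'.spanningCoe = H := rfl
  have cardH := Nat.card_congr (H'.spanningCoeEquivCoeOfSpanning hs).connectedComponentEquiv
  rw [hsc] at cardH
  refine ⟨H', ⟨⟨hs, fun v => h1 v⟩, by omega⟩, ?_⟩
  have hle : ∑ᶠ e ∈ S, c e ≤ ∑ᶠ e ∈ T.spanningCoe.edgeSet, c e := by
    rw [← finsum_mem_add_sdiff h3 (Set.toFinite _)]
    have : 0 ≤ ∑ᶠ e ∈ T.spanningCoe.edgeSet \ S, c e :=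
      finsum_nonneg fun e => finsum_nonneg fun _ => hc e
    linarith
  unfold subgraphWeight
  rw [← Subgraph.edgeSet_spanningCoe, ← Subgraph.edgeSet_spanningCoe,
    ← Subgraph.edgeSet_spanningCoe, hsc]
  linarith
end

section
/- Let K_V be the complete graph on a finite vertex set V with n = |V| vertices and nonnegative edge weights c satisfying the triangle inequality. Let F be a 2-factor of K_V with q cycles and let p be an integer with q ≤ p ≤ ⌈(n − 2⌈n/5⌉)/3⌉. Then there exists a Hamiltonian p-median solution of K_V with total weight at most 2·c(F). -/
open SimpleGraph

/-- Weight of a path given by a list of vertices. -/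
noncomputable def pathW {V : Type*} (c : Sym2 V → ℝ) : List V → ℝ
  | [] => 0
  | [_] => 0
  | a :: b :: t => c s(a, b) + pathW c (b :: t)

lemma pathW_sum {V : Type*} (c : Sym2 V → ℝ) (l : List V) (m : ℕ) (h : l.length = m + 1) :
    ∑ j : Fin m, c s(l[j.val]'(by omega), l[j.val + 1]'(by omega)) = pathW c l := by
  induction l generalizing m with
  | nil => simp at h
  | cons a t ih =>
    cases t with
    | nil =>
      have : m = 0 := by simpa using h.symm
      subst this
      simp [pathW]
    | cons b t =>
      obtain ⟨k, rfl⟩ : ∃ k, m = k + 1 := ⟨t.length, by simp at h; omega⟩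
      rw [Fin.sum_univ_succ, pathW, ← ih k (by simpa using h)]
      simp

lemma pathW_split {V : Type*} (c : Sym2 V → ℝ) (hc : ∀ e, 0 ≤ c e) (a b : List V) :
    pathW c a + pathW c b ≤ pathW c (a ++ b) := by
  induction a with
  | nil => simp [pathW]
  | cons x t ih =>
    cases t with
    | nil =>
      cases b with
      | nil => simp [pathW]
      | cons y b => simp [pathW, hc]
    | cons y t =>
      simp only [List.cons_append, pathW] at ih ⊢
      linarith

lemma pathW_walk {V : Type*} (c : Sym2 V → ℝ) {G : SimpleGraph V} {u v : V} (w : G.Walk u v) :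
    pathW c w.support = (w.edges.map c).sum := by
  induction w with
  | nil => simp [pathW]
  | cons h w ih =>
    cases w with
    | nil => simp [pathW]
    | cons h' w =>
      simp only [Walk.support_cons, Walk.edges_cons, List.map_cons, List.sum_cons, pathW] at ih ⊢
      rw [ih]

lemma path_tri {V : Type*} (c : Sym2 V → ℝ)
    (htri : ∀ u v x : V, u ≠ v → v ≠ x → u ≠ x → c s(u, x) ≤ c s(u, v) + c s(v, x))
    (m : ℕ) (g : Fin (m + 2) → V) (hg : Function.Injective g) :
    c s(g 0, g (Fin.last (m + 1))) ≤ ∑ j : Fin (m + 1), c s(g j.castSucc, g j.succ) := by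
  induction m with
  | zero => simp
  | succ m ih =>
    rw [Fin.sum_univ_castSucc]
    have := ih (fun j => g j.castSucc) (fun a b h => by simpa using hg h)
    have h2 := htri (g 0) (g (Fin.last (m + 1)).castSucc) (g (Fin.last (m + 2)))
      (fun h => by have := hg h; simp [Fin.ext_iff] at this)
      (fun h => by have := hg h; simp [Fin.ext_iff] at this)
      (fun h => by have := hg h; simp [Fin.ext_iff] at this)
    simp only [Fin.castSucc_zero, Fin.succ_last, Fin.succ_castSucc] at *
    linarith

lemma cyc_le {V : Type*} (c : Sym2 V → ℝ)
    (htri : ∀ u v x : V, u ≠ v → v ≠ x → u ≠ x → c s(u, x) ≤ c s(u, v) + c s(v, x))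
    (m : ℕ) (g : Fin (m + 2) → V) (hg : Function.Injective g) :
    ∑ j, c s(g j, g (j + 1)) ≤ 2 * ∑ j : Fin (m + 1), c s(g j.castSucc, g j.succ) := by
  have := path_tri c htri m g hg
  rw [Fin.sum_univ_castSucc]
  simp only [Fin.coeSucc_eq_succ, Fin.last_add_one]
  rw [Sym2.eq_swap] at this
  linarith

/-- The disjoint union of cycles. -/
def cycG {V ι : Type*} (k : ι → ℕ) (f : (Σ i, Fin (k i + 3)) ≃ V) : SimpleGraph V where
  Adj u v := ∃ i, ∃ a b : Fin (k i + 3), (cycleGraph (k i + 3)).Adj a b ∧ f ⟨i, a⟩ = u ∧ f ⟨i, b⟩ = v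
  symm := ⟨fun _ _ ⟨i, a, b, h, h1, h2⟩ => ⟨i, b, a, h.symm, h2, h1⟩⟩
  loopless := ⟨fun u ⟨i, a, b, h, h1, h2⟩ => by
    subst h2
    simp at h1
    exact h.ne h1⟩

lemma build {V ι : Type*} [Fintype V] [Fintype ι] (c : Sym2 V → ℝ) (hc : ∀ e, 0 ≤ c e)
    (k : ι → ℕ) (f : (Σ i, Fin (k i + 3)) ≃ V) :
    ∃ H : (⊤ : SimpleGraph V).Subgraph, IsHpMedianSolution (Fintype.card ι) H ∧
      subgraphWeight c H ≤ ∑ i, ∑ j, c s(f ⟨i, j⟩, f ⟨i, j + 1⟩) := by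
  classical
  let G := cycG k f
  let H : (⊤ : SimpleGraph V).Subgraph := SimpleGraph.toSubgraph G le_top
  have hsp : H.IsSpanning := SimpleGraph.toSubgraph.isSpanning G le_top
  have hHG : H.spanningCoe = G := by ext; rfl
  refine ⟨H, ⟨⟨hsp, ?_⟩, ?_⟩, ?_⟩
  · intro v
    obtain ⟨⟨i, a⟩, rfl⟩ := f.surjective v
    have : H.neighborSet (f ⟨i, a⟩) = (fun b => f ⟨i, b⟩) '' ((cycleGraph (k i + 3)).neighborSet a) := by
      ext w
      constructor
      · rintro ⟨i', a', b, h, h1, h2⟩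
        have h1' := f.injective h1
        cases h1'
        exact ⟨b, h, h2⟩
      · rintro ⟨b, h, h2⟩
        exact ⟨i, a, b, h, rfl, h2⟩
    rw [this, Set.ncard_image_of_injective _ (fun x y h => by simpa using h),
      ← cycleGraph_degree_three_le (v := a), Set.ncard_eq_toFinset_card', ← SimpleGraph.card_neighborFinset_eq_degree]
    rfl
  · rw [Nat.card_congr (H.spanningCoeEquivCoeOfSpanning hsp).connectedComponentEquiv.symm, hHG]
    rw [← Nat.card_eq_fintype_card]
    symm
    apply Nat.card_congr
    refine Equiv.ofBijective (fun i => G.connectedComponentMk (f ⟨i, 0⟩)) ⟨?_, ?_⟩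
    · intro i j h
      have hr : G.Reachable (f ⟨i, 0⟩) (f ⟨j, 0⟩) := ConnectedComponent.exact h
      have key : ∀ u v, G.Reachable u v → (f.symm u).1 = (f.symm v).1 := by
        rintro u v ⟨w⟩
        induction w with
        | nil => rfl
        | cons h w ih =>
          rw [← ih]
          obtain ⟨i, a, b, h, rfl, rfl⟩ := h
          simp
      simpa using key _ _ hr
    · intro C
      induction C using ConnectedComponent.ind with | _ v
      obtain ⟨⟨i, a⟩, rfl⟩ := f.surjective v
      refine ⟨i, ConnectedComponent.sound ?_⟩
      let φ : cycleGraph (k i + 3) →g G := ⟨fun b => f ⟨i, b⟩, fun {x y} h => ⟨i, x, y, h, rfl, rfl⟩⟩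
      exact (cycleGraph_connected.preconnected (0 : Fin (k i + 3)) a).map φ
  · unfold subgraphWeight
    rw [← Fintype.sum_sigma' (fun i j => c s(f ⟨i, j⟩, f ⟨i, j + 1⟩))]
    have hsub : H.edgeSet ⊆ ((Finset.univ.image (fun x : (Σ i, Fin (k i + 3)) => s(f ⟨x.1, x.2⟩, f ⟨x.1, x.2 + 1⟩)) : Finset (Sym2 V)) : Set (Sym2 V)) := by
      intro e
      induction e using Sym2.ind with | _ u v
      rintro ⟨i, a, b, h, rfl, rfl⟩
      rw [cycleGraph_adj] at h
      simp only [Finset.coe_image, Finset.coe_univ, Set.image_univ, Set.mem_range]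
      rcases h with h | h
      · refine ⟨⟨i, b⟩, ?_⟩
        rw [sub_eq_iff_eq_add] at h
        rw [h, Sym2.eq_swap, add_comm]
      · refine ⟨⟨i, a⟩, ?_⟩
        rw [sub_eq_iff_eq_add] at h
        rw [h, add_comm]
    rw [finsum_mem_eq_finite_toFinset_sum _ (Set.toFinite H.edgeSet)]
    calc _ ≤ ∑ e ∈ (Finset.univ.image (fun x : (Σ i, Fin (k i + 3)) => s(f ⟨x.1, x.2⟩, f ⟨x.1, x.2 + 1⟩))), c e := by
            apply Finset.sum_le_sum_of_subset_of_nonneg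
            · intro e he
              exact hsub (by simpa using he)
            · intros; exact hc _
      _ ≤ _ := by
            refine (Finset.sum_image_le_of_nonneg ?_).trans le_rfl
            intros; exact hc _

lemma build_list {V : Type*} [Fintype V] (c : Sym2 V → ℝ) (hc : ∀ e, 0 ≤ c e)
    (htri : ∀ u v x : V, u ≠ v → v ≠ x → u ≠ x → c s(u, x) ≤ c s(u, v) + c s(v, x))
    (L : List (List V)) (hnd : L.flatten.Nodup) (hall : ∀ v, v ∈ L.flatten)
    (h3 : ∀ l ∈ L, 3 ≤ l.length) :
    ∃ H : (⊤ : SimpleGraph V).Subgraph, IsHpMedianSolution L.length H ∧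
      subgraphWeight c H ≤ 2 * (L.map (pathW c)).sum := by
  classical
  have h3' : ∀ i : Fin L.length, 3 ≤ L[i].length := fun i => h3 _ (List.getElem_mem _)
  let k : Fin L.length → ℕ := fun i => L[i].length - 3
  have hk : ∀ i, k i + 3 = L[i].length := fun i => by have := h3' i; simp only [k]; omega
  rw [List.nodup_flatten] at hnd
  let f : (Σ i, Fin (k i + 3)) → V := fun x => L[x.1][x.2.val]'(by have := hk x.1; omega)
  have hf : Function.Bijective f := by
    constructor
    · rintro ⟨i, a⟩ ⟨j, b⟩ h
      have hij : i = j := by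
        by_contra hne
        have hd : ∀ i j : Fin L.length, i < j → List.Disjoint L[i] L[j] := fun i j hij =>
          (List.pairwise_iff_getElem.mp hnd.2) i j i.2 j.2 hij
        have m1 : f ⟨i, a⟩ ∈ L[i] := List.getElem_mem _
        have m2 : f ⟨j, b⟩ ∈ L[j] := List.getElem_mem _
        rw [← h] at m2
        rcases lt_or_gt_of_ne hne with h' | h'
        · exact hd i j h' m1 m2
        · exact hd j i h' m2 m1
      subst hij
      have := (List.Nodup.getElem_inj_iff (hnd.1 _ (List.getElem_mem i.2))).mp h
      simp only [Fin.val_inj] at this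
      rw [this]
    · intro v
      obtain ⟨l, hl, hv⟩ := List.mem_flatten.mp (hall v)
      obtain ⟨i, hi, rfl⟩ := List.mem_iff_getElem.mp hl
      obtain ⟨j, hj, rfl⟩ := List.mem_iff_getElem.mp hv
      exact ⟨⟨⟨i, hi⟩, ⟨j, by have := hk ⟨i, hi⟩; simp only [Fin.getElem_fin] at this; omega⟩⟩, rfl⟩
  obtain ⟨H, hH, hw⟩ := build c hc k (Equiv.ofBijective f hf)
  rw [Fintype.card_fin] at hH
  refine ⟨H, hH, hw.trans ?_⟩
  have hs : (L.map (pathW c)).sum = ∑ i : Fin L.length, pathW c L[i] := by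
    rw [← Fin.sum_univ_fun_getElem]; rfl
  rw [hs, Finset.mul_sum]
  apply Finset.sum_le_sum
  intro i _
  rw [← pathW_sum c L[i] (k i + 2) (by rw [← hk i])]
  exact cyc_le c htri (k i + 1) (fun j => f ⟨i, j⟩) (fun x y h => by simpa using hf.1 h)

lemma split_step {V : Type*} (c : Sym2 V → ℝ) (hc : ∀ e, 0 ≤ c e)
    (L : List (List V)) (hnd : L.flatten.Nodup) (h3 : ∀ l ∈ L, 3 ≤ l.length)
    (hlen : 5 * L.length < L.flatten.length) :
    ∃ L' : List (List V), L'.length = L.length + 1 ∧ L'.flatten.Perm L.flatten ∧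
      (∀ l ∈ L', 3 ≤ l.length) ∧ (L'.map (pathW c)).sum ≤ (L.map (pathW c)).sum := by
  have : ∃ l ∈ L, 6 ≤ l.length := by
    by_contra! h
    have := List.sum_le_card_nsmul (L.map List.length) 5 (by
      intro x hx
      obtain ⟨l, hl, rfl⟩ := List.mem_map.mp hx
      have := h l hl
      omega)
    rw [List.length_flatten] at hlen
    simp at this
    omega
  obtain ⟨l, hl, h6⟩ := this
  obtain ⟨s, t, rfl⟩ := List.append_of_mem hl
  refine ⟨s ++ l.take 3 :: l.drop 3 :: t, by simp; omega, ?_, ?_, ?_⟩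
  · have : (s ++ l.take 3 :: l.drop 3 :: t).flatten = (s ++ l :: t).flatten := by
      simp [← List.append_assoc (List.take 3 l)]
    rw [this]
  · intro x hx
    simp only [List.mem_append, List.mem_cons] at hx
    rcases hx with hx | rfl | rfl | hx
    · exact h3 x (by simp [hx])
    · simp; omega
    · simp; omega
    · exact h3 x (by simp [hx])
  · have := pathW_split c hc (l.take 3) (l.drop 3)
    rw [List.take_append_drop] at this
    simp
    linarith

lemma split_many {V : Type*} (c : Sym2 V → ℝ) (hc : ∀ e, 0 ≤ c e)
    (L : List (List V)) (hnd : L.flatten.Nodup) (h3 : ∀ l ∈ L, 3 ≤ l.length)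
    (p : ℕ) (hp : L.length ≤ p) (hb : 5 * p < L.flatten.length + 5) :
    ∃ L' : List (List V), L'.length = p ∧ L'.flatten.Perm L.flatten ∧
      (∀ l ∈ L', 3 ≤ l.length) ∧ (L'.map (pathW c)).sum ≤ (L.map (pathW c)).sum := by
  induction p, hp using Nat.le_induction with
  | base => exact ⟨L, rfl, List.Perm.refl _, h3, le_rfl⟩
  | succ p hp ih =>
    obtain ⟨L1, h1, h2, h4, h5⟩ := ih (by omega)
    obtain ⟨L2, g1, g2, g4, g5⟩ := split_step c hc L1 (h2.nodup_iff.mpr hnd) h4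
      (by rw [h2.length_eq]; omega)
    exact ⟨L2, by omega, g2.trans h2, g4, g5.trans h5⟩

lemma to_list {V : Type*} [Fintype V] (c : Sym2 V → ℝ) (hc : ∀ e, 0 ≤ c e)
    (F : (⊤ : SimpleGraph V).Subgraph) (hF : IsTwoFactor F) :
    ∃ L : List (List V), L.length = Nat.card F.coe.ConnectedComponent ∧ L.flatten.Nodup ∧
      (∀ v, v ∈ L.flatten) ∧ (∀ l ∈ L, 3 ≤ l.length) ∧
      (L.map (pathW c)).sum ≤ subgraphWeight c F := by
  classical
  let G := F.spanningCoe
  have hN : ∀ v, (G.neighborSet v).ncard = 2 := hF.2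
  have hcyc : G.IsCycles := fun v _ => hN v
  have hex : ∀ C : G.ConnectedComponent, ∃ v, ∃ w : G.Walk v v, w.IsCycle ∧ w.toSubgraph.verts = C.supp := by
    intro C
    induction C using ConnectedComponent.ind with | _ v
    exact ⟨v, hcyc.exists_cycle_toSubgraph_verts_eq_connectedComponentSupp (v := v) rfl
      (Set.nonempty_of_ncard_ne_zero (by rw [hN v]; norm_num))⟩
  choose b w hw hsupp using hex
  have hts : ∀ C, (w C).tail.support = (w C).support.tail := fun C =>
    (w C).support_tail_of_not_nil (hw C).not_nil
  have hmem : ∀ C v, v ∈ (w C).tail.support ↔ G.connectedComponentMk v = C := by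
    intro C v
    have h1 : v ∈ (w C).support ↔ G.connectedComponentMk v = C := by
      rw [← Walk.mem_verts_toSubgraph, hsupp C]; rfl
    rw [← h1, hts]
    constructor
    · exact List.mem_of_mem_tail
    · intro h
      rw [Walk.mem_support_iff] at h
      rcases h with rfl | h
      · exact Walk.end_mem_tail_support (hw C).not_nil
      · exact h
  have hnd : ∀ C, (w C).tail.support.Nodup := fun C => by rw [hts]; exact (hw C).support_nodup
  refine ⟨(Finset.univ : Finset G.ConnectedComponent).toList.map (fun C => (w C).tail.support), ?_, ?_, ?_, ?_, ?_⟩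
  · rw [Nat.card_congr (F.spanningCoeEquivCoeOfSpanning hF.1).connectedComponentEquiv.symm]
    simp [G]
  · rw [List.nodup_flatten]
    constructor
    · intro l hl
      obtain ⟨C, _, rfl⟩ := List.mem_map.mp hl
      exact hnd C
    · rw [List.pairwise_map]
      refine (Finset.nodup_toList _).imp ?_
      intro C D hCD v h1 h2
      exact hCD (((hmem C v).mp h1).symm.trans ((hmem D v).mp h2))
  · intro v
    rw [List.mem_flatten]
    exact ⟨_, List.mem_map.mpr ⟨G.connectedComponentMk v, by simp, rfl⟩, (hmem _ _).mpr rfl⟩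
  · intro l hl
    obtain ⟨C, _, rfl⟩ := List.mem_map.mp hl
    rw [hts]
    simpa using (hw C).three_le_length
  · rw [List.map_map]
    have : ((Finset.univ : Finset G.ConnectedComponent).toList.map (pathW c ∘ fun C => (w C).tail.support)).sum
        = ∑ C, ∑ e ∈ (w C).tail.edges.toFinset, c e := by
      rw [Finset.sum_map_toList]
      apply Finset.sum_congr rfl
      intro C _
      rw [Function.comp, pathW_walk, List.sum_toFinset _ (Walk.edges_nodup_of_support_nodup (hnd C))]
    rw [this, ← Finset.sum_biUnion]
    · unfold subgraphWeight
      rw [finsum_mem_eq_finite_toFinset_sum _ (Set.toFinite F.edgeSet)]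
      apply Finset.sum_le_sum_of_subset_of_nonneg
      · intro e he
        simp only [Finset.mem_biUnion, List.mem_toFinset] at he
        obtain ⟨C, _, he⟩ := he
        have := Walk.edges_subset_edgeSet _ he
        simpa [G] using this
      · intros; exact hc _
    · intro C _ D _ hCD
      rw [Function.onFun, Finset.disjoint_left]
      intro e h1 h2
      rw [List.mem_toFinset] at h1 h2
      induction e using Sym2.ind with | _ u v
      have a1 := (hmem C u).mp (Walk.fst_mem_support_of_mem_edges _ h1)
      have a2 := (hmem D u).mp (Walk.fst_mem_support_of_mem_edges _ h2)
      exact hCD (a1.symm.trans a2)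

/-- in a complete graph on `n` vertices with nonnegative weights
satisfying the triangle inequality, given a 2-factor `F` with `q` cycles and an integer
`p` with `q ≤ p ≤ ⌈(n - 2⌈n/5⌉)/3⌉`, there is a Hamiltonian `p`-median solution of
weight at most `2c(F)`. -/
theorem split_case_q_lt_p {V : Type*} [Fintype V] (n : ℕ) (hn : Fintype.card V = n)
    (c : Sym2 V → ℝ) (hc : ∀ e, 0 ≤ c e)
    (htri : ∀ u v x : V, u ≠ v → v ≠ x → u ≠ x → c s(u, x) ≤ c s(u, v) + c s(v, x))
    (F : (⊤ : SimpleGraph V).Subgraph) (q p : ℕ)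
    (hF : IsTwoFactor F) (hFq : Nat.card F.coe.ConnectedComponent = q)
    (hqp : q ≤ p) (hpb : (p : ℤ) ≤ ⌈((n : ℚ) - 2 * (⌈(n : ℚ) / 5⌉ : ℚ)) / 3⌉) :
    ∃ H : (⊤ : SimpleGraph V).Subgraph, IsHpMedianSolution p H ∧
      subgraphWeight c H ≤ 2 * subgraphWeight c F := by
  obtain ⟨L, h1, h2, h3, h4, h5⟩ := to_list c hc F hF
  have hfl : L.flatten.length = n := by
    classical
    rw [← hn, ← List.toFinset_card_of_nodup h2, ← Finset.card_univ]
    congr 1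
    ext v
    simpa using h3 v
  have hb : 5 * p < n + 5 := by
    have e1 : (p : ℚ) < ((n : ℚ) - 2 * (⌈(n : ℚ) / 5⌉ : ℚ)) / 3 + 1 := by
      have := Int.ceil_lt_add_one (((n : ℚ) - 2 * (⌈(n : ℚ) / 5⌉ : ℚ)) / 3)
      have h' : ((p : ℤ) : ℚ) ≤ (⌈((n : ℚ) - 2 * (⌈(n : ℚ) / 5⌉ : ℚ)) / 3⌉ : ℚ) := by exact_mod_cast hpb
      push_cast at h'
      linarith
    have e2 := Int.le_ceil ((n : ℚ) / 5)
    have : (5 * p : ℚ) < n + 5 := by linarith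
    exact_mod_cast this
  obtain ⟨L', g1, g2, g3, g4⟩ := split_many c hc L h2 h4 p (by omega) (by omega)
  obtain ⟨H, hH, hw⟩ := build_list c hc htri L' (g2.nodup_iff.mpr h2)
    (fun v => g2.mem_iff.mpr (h3 v)) g3
  rw [g1] at hH
  exact ⟨H, hH, by linarith⟩
end

section
/- Let K_V be the complete graph on a finite vertex set V with n = |V| vertices and nonnegative edge weights c satisfying the triangle inequality, and let p be an integer with 1 ≤ p ≤ ⌈(n − 2⌈n/5⌉)/3⌉. Let μ₂ be the minimum weight of a 2-factor of K_V and let μ_T be the minimum weight of a spanning forest of K_V with exactly p connected components. Then there exists a Hamiltonian p-median solution of K_V with total weight at most max(2·μ₂, μ₂ + 2·μ_T). -/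
open SimpleGraph

theorem merge_same {V : Type*} [Finite V] [DecidableEq V] (σ : Equiv.Perm V) (u v : V) (h : ¬ σ.SameCycle u v) :
    (σ * Equiv.swap u v).SameCycle u v := by
  set τ := σ * Equiv.swap u v with hτ
  have hu : τ u = σ v := by simp [hτ]
  have key : ∀ i : ℕ, τ.SameCycle u ((σ ^ (i+1)) v) := by
    intro i
    induction i with
    | zero => 
      rw [zero_add, pow_one, ← hu]; exact ⟨1, by simp⟩
    | succ i ih =>
      by_cases hv : (σ ^ (i+1)) v = v
      · rw [pow_succ', Equiv.Perm.mul_apply, hv, ← hu]; exact ⟨1, by simp⟩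
      · have hne : (σ ^ (i+1)) v ≠ u := by
          intro h'
          apply h
          refine Equiv.Perm.SameCycle.symm ⟨(i+1 : ℕ), by rw [zpow_natCast]; exact h'⟩
        have : τ ((σ ^ (i+1)) v) = σ ((σ ^ (i+1)) v) := by
          simp only [hτ, Equiv.Perm.mul_apply]
          rw [Equiv.swap_apply_of_ne_of_ne hne hv]
        rw [pow_succ' σ (i+1), Equiv.Perm.mul_apply, ← this]
        exact ih.trans ⟨1, by simp⟩
  have ho : 0 < orderOf σ := orderOf_pos σ
  have := key (orderOf σ - 1)
  rwa [Nat.sub_add_cancel ho, pow_orderOf_eq_one] at this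

theorem sameCycle_of_rel {V : Type*} (σ : Equiv.Perm V) (r : V → V → Prop) (hr : Equivalence r)
    (h : ∀ x, r x (σ x)) {x y : V} (hxy : σ.SameCycle x y) : r x y := by
  obtain ⟨i, rfl⟩ := hxy
  induction i using Int.induction_on with
  | zero => exact hr.refl _
  | succ i ih =>
    rw [add_comm, zpow_add, zpow_one, Equiv.Perm.mul_apply]; exact hr.trans ih (h _)
  | pred i ih =>
    have := h ((σ ^ (-(i:ℤ) - 1)) x)
    rw [← Equiv.Perm.mul_apply, ← zpow_one_add] at this
    refine hr.trans ih (hr.symm ?_)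
    convert this using 3
    ring

theorem merge_iff {V : Type*} [Finite V] [DecidableEq V] (σ : Equiv.Perm V) (u v : V) (h : ¬ σ.SameCycle u v) (x y : V) :
    (σ * Equiv.swap u v).SameCycle x y ↔ (σ.SameCycle x y ∨
      ((σ.SameCycle u x ∨ σ.SameCycle v x) ∧ (σ.SameCycle u y ∨ σ.SameCycle v y))) := by
  have huv := merge_same σ u v h
  set τ := σ * Equiv.swap u v with hτ
  have hu : τ u = σ v := by simp [hτ]
  have hv : τ v = σ u := by simp [hτ]
  have hx : ∀ x, x ≠ u → x ≠ v → τ x = σ x := by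
    intro x h1 h2
    simp [hτ, Equiv.swap_apply_of_ne_of_ne h1 h2]
  have h1 : ∀ x y, σ.SameCycle x y → τ.SameCycle x y := by
    intro x y
    apply sameCycle_of_rel σ τ.SameCycle ⟨.refl _, .symm, .trans⟩
    intro x
    by_cases xu : x = u
    · subst xu; rw [← hv]; exact huv.trans ⟨1, by simp⟩
    by_cases xv : x = v
    · subst xv; rw [← hu]; exact huv.symm.trans ⟨1, by simp⟩
    rw [← hx x xu xv]; exact ⟨1, by simp⟩
  constructor
  · apply sameCycle_of_rel τ (fun x y => (σ.SameCycle x y ∨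
      ((σ.SameCycle u x ∨ σ.SameCycle v x) ∧ (σ.SameCycle u y ∨ σ.SameCycle v y))))
    · refine ⟨fun x => .inl (.refl _ _), ?_, ?_⟩
      · rintro x y (h | h)
        · exact .inl h.symm
        · exact .inr h.symm
      · rintro x y z (h | h) (h' | h')
        · exact .inl (h.trans h')
        · exact .inr ⟨h'.1.imp (fun k => k.trans h.symm) (fun k => k.trans h.symm), h'.2⟩
        · exact .inr ⟨h.1, h.2.imp (fun k => k.trans h') (fun k => k.trans h')⟩
        · exact .inr ⟨h.1, h'.2⟩
    intro x
    by_cases xu : x = u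
    · subst xu; rw [hu]; exact .inr ⟨.inl (.refl _ _), .inr ⟨1, by simp⟩⟩
    by_cases xv : x = v
    · subst xv; rw [hv]; exact .inr ⟨.inr (.refl _ _), .inl ⟨1, by simp⟩⟩
    rw [hx x xu xv]; exact .inl ⟨1, by simp⟩
  · have h2 : ∀ x, (σ.SameCycle u x ∨ σ.SameCycle v x) → τ.SameCycle u x := by
      rintro x (h | h)
      · exact h1 _ _ h
      · exact huv.trans (h1 _ _ h)
    rintro (h | ⟨h, h'⟩)
    · exact h1 _ _ h
    · exact (h2 _ h).symm.trans (h2 _ h')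

noncomputable def numCyc {V : Type*} (σ : Equiv.Perm V) : ℕ :=
  Nat.card (Quotient (Equiv.Perm.SameCycle.setoid σ))

theorem merge_card {V : Type*} [Finite V] [DecidableEq V] (σ : Equiv.Perm V) (u v : V) (h : ¬ σ.SameCycle u v) :
    numCyc (σ * Equiv.swap u v) + 1 = numCyc σ := by
  classical
  have key := merge_iff σ u v h
  set τ := σ * Equiv.swap u v with hτ
  unfold numCyc
  let Q := Quotient (Equiv.Perm.SameCycle.setoid σ)
  let q : Q := Quotient.mk _ v
  have e : Nat.card {x : Q // x ≠ q} = Nat.card (Quotient (Equiv.Perm.SameCycle.setoid τ)) := by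
    let f : Q → Quotient (Equiv.Perm.SameCycle.setoid τ) :=
      Quotient.lift (fun x => Quotient.mk _ x) (by
        intro a b hab
        apply Quotient.sound
        exact (key a b).2 (.inl hab))
    refine Nat.card_congr (Equiv.ofBijective (fun x => f x.1) ⟨?_, ?_⟩)
    · rintro ⟨x, hx⟩ ⟨y, hy⟩ hxy
      induction x using Quotient.inductionOn with | _ x
      induction y using Quotient.inductionOn with | _ y
      have hx' : ¬ σ.SameCycle v x := fun h => hx (Quotient.sound h.symm)
      have hy' : ¬ σ.SameCycle v y := fun h => hy (Quotient.sound h.symm)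
      have hxy' : τ.SameCycle x y := Quotient.exact hxy
      apply Subtype.ext
      apply Quotient.sound
      change σ.SameCycle x y
      rw [key] at hxy'
      rcases hxy' with h | ⟨h, h'⟩
      · exact h
      · exact (h.resolve_right hx').symm.trans (h'.resolve_right hy')
    · intro y
      induction y using Quotient.inductionOn with | _ y
      by_cases hy : σ.SameCycle y v
      · refine ⟨⟨Quotient.mk _ u, fun hh => h (Quotient.exact hh)⟩, Quotient.sound ?_⟩
        exact (key u y).2 (.inr ⟨.inl (.refl _ _), .inr hy.symm⟩)
      · exact ⟨⟨Quotient.mk _ y, fun hh => hy (Quotient.exact hh)⟩, rfl⟩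
  rw [← e]
  have := Finite.card_option (α := {x : Q // x ≠ q})
  rw [← this]
  exact Nat.card_congr (Equiv.optionSubtypeNe q)

/-- all cycles have length at least three -/
def Valid {V : Type*} (σ : Equiv.Perm V) : Prop := ∀ x, σ x ≠ x ∧ σ (σ x) ≠ x

theorem merge_valid {V : Type*} [DecidableEq V] (σ : Equiv.Perm V) (u v : V) (h : ¬ σ.SameCycle u v) (hσ : Valid σ) :
    Valid (σ * Equiv.swap u v) := by
  have a1 : ∀ x, σ x ≠ x := fun x => (hσ x).1
  have a2 : ∀ x, σ (σ x) ≠ x := fun x => (hσ x).2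
  have b1 : σ u ≠ v := fun hh => h ⟨1, by simpa using hh⟩
  have b2 : σ v ≠ u := fun hh => h (Equiv.Perm.SameCycle.symm ⟨1, by simpa using hh⟩)
  have b3 : σ (σ u) ≠ v := fun hh => h ⟨(2:ℕ), by rw [zpow_natCast, pow_two]; exact hh⟩
  have b4 : σ (σ v) ≠ u := fun hh => h (Equiv.Perm.SameCycle.symm ⟨(2:ℕ), by rw [zpow_natCast, pow_two]; exact hh⟩)
  have b5 : u ≠ v := fun hh => h (hh ▸ .refl _ _)
  intro x
  simp only [Equiv.Perm.mul_apply, Equiv.swap_apply_def]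
  grind

theorem split_valid {V : Type*} [DecidableEq V] (σ : Equiv.Perm V) (v : V) (hσ : Valid σ)
   (h3 : (σ ^ 3) v ≠ v) (h4 : (σ ^ 4) v ≠ v) (h5 : (σ ^ 5) v ≠ v) :
    Valid (σ * Equiv.swap v ((σ ^ 3) v)) := by
  have a1 : ∀ x, σ x ≠ x := fun x => (hσ x).1
  have a2 : ∀ x, σ (σ x) ≠ x := fun x => (hσ x).2
  have inj := σ.injective
  have inj' : ∀ a b, σ a = σ b → a = b := fun a b h => inj h
  simp only [pow_succ, pow_zero, one_mul, Equiv.Perm.mul_apply] at *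
  intro x
  simp only [Equiv.Perm.mul_apply, Equiv.swap_apply_def]
  grind

theorem split_not_same {V : Type*} [DecidableEq V] (σ : Equiv.Perm V) (v : V) (hσ : Valid σ)
   (h3 : (σ ^ 3) v ≠ v) (h4 : (σ ^ 4) v ≠ v) (h5 : (σ ^ 5) v ≠ v) :
    ¬ (σ * Equiv.swap v ((σ ^ 3) v)).SameCycle v ((σ ^ 3) v) := by
  have a1 : ∀ x, σ x ≠ x := fun x => (hσ x).1
  have a2 : ∀ x, σ (σ x) ≠ x := fun x => (hσ x).2
  have inj' : ∀ a b, σ a = σ b → a = b := fun a b h => σ.injective h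
  intro hh
  have := sameCycle_of_rel _ (fun x y => (x = σ v ∨ x = (σ^2) v ∨ x = (σ^3) v) ↔ 
     (y = σ v ∨ y = (σ^2) v ∨ y = (σ^3) v)) ⟨fun _ => Iff.rfl, fun h => h.symm, fun h h' => h.trans h'⟩ ?_ hh
  · simp only [pow_succ, pow_zero, one_mul, Equiv.Perm.mul_apply] at *
    grind
  · intro x
    simp only [pow_succ, pow_zero, one_mul, Equiv.Perm.mul_apply, Equiv.swap_apply_def] at *
    grind

theorem card_le_aux {V : Type*} [Finite V] (T : SimpleGraph V) (σ : Equiv.Perm V)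
    (h : ∀ u v, T.Adj u v → σ.SameCycle u v) : numCyc σ ≤ Nat.card T.ConnectedComponent := by
  have hr : ∀ u v, T.Reachable u v → σ.SameCycle u v := by
    rintro u v ⟨w⟩
    induction w with
    | nil => exact .refl _ _
    | cons a _ ih => exact (h _ _ a).trans ih
  refine Nat.card_le_card_of_surjective (fun C : T.ConnectedComponent =>
    Quot.lift (fun v => (Quotient.mk (Equiv.Perm.SameCycle.setoid σ) v))
      (fun a b hab => Quotient.sound (hr a b hab)) C) ?_
  intro q
  induction q using Quotient.inductionOn with | _ v
  exact ⟨T.connectedComponentMk v, rfl⟩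

theorem exists_long {V : Type*} [Fintype V] (σ : Equiv.Perm V)
    (h : numCyc σ * 5 < Fintype.card V) :
    ∃ v₀, ∀ v, σ.SameCycle v₀ v → ∀ i : ℕ, 1 ≤ i → i ≤ 5 → (σ ^ i) v ≠ v := by
  classical
  have : Fintype (Quotient (Equiv.Perm.SameCycle.setoid σ)) := Fintype.ofFinite _
  unfold numCyc at h
  rw [Nat.card_eq_fintype_card] at h
  obtain ⟨q, hq⟩ := Fintype.exists_lt_card_fiber_of_mul_lt_card
    (f := fun v : V => (Quotient.mk (Equiv.Perm.SameCycle.setoid σ) v)) h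
  induction q using Quotient.inductionOn with | _ v₀
  refine ⟨v₀, fun v hv i hi hi5 hper => ?_⟩
  have hsub : (Finset.univ.filter fun x => (Quotient.mk (Equiv.Perm.SameCycle.setoid σ) x)
      = Quotient.mk _ v₀) ⊆ (Finset.range i).image (fun j => (σ ^ j) v) := by
    intro y hy
    have hy' : σ.SameCycle y v₀ := Quotient.exact (Finset.mem_filter.1 hy).2
    obtain ⟨k, hk⟩ := (hv.symm.trans hy'.symm).exists_nat_pow_eq
    refine Finset.mem_image.2 ⟨k % i, Finset.mem_range.2 (Nat.mod_lt _ hi), ?_⟩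
    rw [← hk]
    conv_rhs => rw [← Nat.mod_add_div k i, pow_add, Equiv.Perm.mul_apply, pow_mul,
      Equiv.Perm.pow_apply_eq_self_of_apply_eq_self hper]
  have h1 := Finset.card_le_card hsub
  have h2 := Finset.card_image_le (s := Finset.range i) (f := fun j => (σ ^ j) v)
  rw [Finset.card_range] at h2
  omega

/-- Repeated splitting. -/
theorem split_all {V : Type*} [Fintype V] (σ₀ : Equiv.Perm V) (p : ℕ)
    (hp : (p - 1) * 5 < Fintype.card V) (hp1 : 1 ≤ p) (k : ℕ) :
    ∀ (σ : Equiv.Perm V) (B : Set V), Valid σ → numCyc σ + k = p → (∀ x ∉ B, σ x = σ₀ x) →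
      (∀ x ∈ B, ∀ y ∈ B, σ.SameCycle x y → x = y) →
      ∃ (σ : Equiv.Perm V) (B : Set V), Valid σ ∧ numCyc σ = p ∧ (∀ x ∉ B, σ x = σ₀ x) ∧
      (∀ x ∈ B, ∀ y ∈ B, σ.SameCycle x y → x = y) := by
  classical
  induction k with
  | zero => intro σ B h1 h2 h3 h4; exact ⟨σ, B, h1, h2, h3, h4⟩
  | succ k ih =>
    intro σ B hV hk hB hB'
    obtain ⟨v₀, hv₀⟩ := exists_long σ (lt_of_le_of_lt (Nat.mul_le_mul_right 5 (by omega)) hp)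
    obtain ⟨v, hv, hvB⟩ : ∃ v, σ.SameCycle v₀ v ∧ ∀ x ∈ B, σ.SameCycle x v → x = v := by
      by_cases h : ∃ v ∈ B, σ.SameCycle v₀ v
      · obtain ⟨v, hvB, hv⟩ := h
        exact ⟨v, hv, fun x hx hxv => hB' x hx v hvB hxv⟩
      · push Not at h
        exact ⟨v₀, .refl _ _, fun x hx hxv => absurd hxv.symm (h x hx)⟩
    have h3 := hv₀ v hv 3 (by norm_num) (by norm_num)
    have h4 := hv₀ v hv 4 (by norm_num) (by norm_num)
    have h5 := hv₀ v hv 5 (by norm_num) (by norm_num)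
    have hval := split_valid σ v hV h3 h4 h5
    have hns := split_not_same σ v hV h3 h4 h5
    have hvb : σ.SameCycle v ((σ ^ 3) v) := ⟨(3 : ℕ), by rw [zpow_natCast]⟩
    generalize hb : (σ ^ 3) v = b at *
    set τ := σ * Equiv.swap v b with hτ
    have hστ : τ * Equiv.swap v b = σ := by simp [hτ, mul_assoc]
    have hcard := merge_card τ v b hns
    have hle : ∀ x y, τ.SameCycle x y → σ.SameCycle x y := by
      intro x y h
      have := (merge_iff τ v b hns x y).2 (.inl h)
      rwa [hστ] at this
    rw [hστ] at hcard
    refine ih τ (B ∪ {v, b}) hval (by omega) ?_ ?_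
    · intro x hx
      simp only [Set.mem_union, Set.mem_insert_iff, Set.mem_singleton_iff, not_or] at hx
      rw [← hB x hx.1]
      simp [hτ, Equiv.swap_apply_of_ne_of_ne hx.2.1 hx.2.2]
    · have hBb : ∀ x ∈ B, ¬ τ.SameCycle x b := by
        intro x hx h
        have := hvB x hx ((hle _ _ h).trans hvb.symm)
        subst this
        exact hns h
      rintro x (hx | rfl | rfl) y (hy | rfl | rfl) h
      · exact hB' x hx y hy (hle _ _ h)
      · exact hvB x hx (hle _ _ h)
      · exact absurd h (hBb x hx)
      · exact (hvB y hy (hle _ _ h).symm).symm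
      · rfl
      · exact absurd h hns
      · exact absurd h.symm (hBb y hy)
      · exact absurd h.symm hns
      · rfl

noncomputable def wt {V : Type*} [Fintype V] (d : V → V → ℝ) (σ : Equiv.Perm V) : ℝ :=
  ∑ v, d v (σ v)

theorem split_weight {V : Type*} [Fintype V] (d : V → V → ℝ) (h0 : ∀ x, d x x = 0)
    (hs : ∀ x y, d x y = d y x) (hnn : ∀ x y, 0 ≤ d x y) (ht : ∀ x y z, d x z ≤ d x y + d y z)
    (σ₀ σ : Equiv.Perm V) (B : Set V) (hB : ∀ x ∉ B, σ x = σ₀ x)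
    (hB' : ∀ x ∈ B, ∀ y ∈ B, σ.SameCycle x y → x = y) : wt d σ ≤ 2 * wt d σ₀ := by
  classical
  let f : V → ℝ := fun x => if h : ∃ v ∈ B, σ.SameCycle v x then d (σ h.choose) x else 0
  have hf1 : ∀ v ∈ B, ∀ x, σ.SameCycle v x → f x = d (σ v) x := by
    intro v hv x hx
    have h : ∃ v ∈ B, σ.SameCycle v x := ⟨v, hv, hx⟩
    have : h.choose = v := hB' _ h.choose_spec.1 _ hv (h.choose_spec.2.trans hx.symm)
    simp only [f, dif_pos h, this]
  have hf2 : ∀ x, (¬ ∃ v ∈ B, σ.SameCycle v x) → f x = 0 := by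
    intro x h; simp only [f, dif_neg h]
  have hstep : ∀ x, σ.SameCycle x (σ x) := fun x => ⟨1, by simp⟩
  have hsum : ∑ x, (f (σ x) - f x) = 0 := by
    rw [Finset.sum_sub_distrib, Equiv.sum_comp σ f, sub_self]
  have hpt : ∀ x, d x (σ x) + (f (σ x) - f x) ≤ 2 * d x (σ₀ x) := by
    intro x
    by_cases hx : x ∈ B
    · rw [hf1 x hx x (.refl _ _), hf1 x hx (σ x) (hstep x), h0, hs (σ x) x]
      have := hnn x (σ₀ x)
      linarith
    · rw [← hB x hx]
      by_cases h : ∃ v ∈ B, σ.SameCycle v x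
      · obtain ⟨v, hv, hvx⟩ := h
        rw [hf1 v hv x hvx, hf1 v hv (σ x) (hvx.trans (hstep x))]
        have := ht (σ v) x (σ x)
        linarith
      · rw [hf2 x h, hf2 (σ x) (fun ⟨v, hv, hvx⟩ => h ⟨v, hv, hvx.trans (hstep x).symm⟩)]
        have := hnn x (σ x)
        linarith
  have := Finset.sum_le_sum (fun x (_ : x ∈ Finset.univ) => hpt x)
  rw [Finset.sum_add_distrib, hsum, ← Finset.mul_sum] at this
  unfold wt
  linarith

theorem merge_weight {V : Type*} [Fintype V] [DecidableEq V] (d : V → V → ℝ)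
    (hs : ∀ x y, d x y = d y x) (ht : ∀ x y z, d x z ≤ d x y + d y z)
    (σ : Equiv.Perm V) (u v : V) (huv : u ≠ v) :
    wt d (σ * Equiv.swap u v) ≤ wt d σ + 2 * d u v := by
  have hv : v ∈ Finset.univ.erase u := by simp [huv.symm]
  unfold wt
  rw [← Finset.add_sum_erase _ _ (Finset.mem_univ u), ← Finset.add_sum_erase _ _ hv,
    ← Finset.add_sum_erase (a := u) _ (fun x => d x (σ x)) (Finset.mem_univ u), ← Finset.add_sum_erase _ (fun x => d x (σ x)) hv]
  have : ∑ x ∈ (Finset.univ.erase u).erase v, d x ((σ * Equiv.swap u v) x) =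
      ∑ x ∈ (Finset.univ.erase u).erase v, d x (σ x) := by
    refine Finset.sum_congr rfl fun x hx => ?_
    simp only [Finset.mem_erase] at hx
    simp [Equiv.swap_apply_of_ne_of_ne hx.2.1 hx.1]
  rw [this]
  simp only [Equiv.Perm.mul_apply, Equiv.swap_apply_left, Equiv.swap_apply_right]
  have h1 := ht u v (σ v)
  have h2 := ht v u (σ u)
  rw [hs v u] at h2
  linarith

theorem merge_all_s14 {V : Type*} [Fintype V] (d : V → V → ℝ)
    (hs : ∀ x y, d x y = d y x) (ht : ∀ x y z, d x z ≤ d x y + d y z)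
    (T : SimpleGraph V) (p : ℕ) (hT : Nat.card T.ConnectedComponent = p)
    (c : Sym2 V → ℝ) (hc : ∀ e, 0 ≤ c e) (hdc : ∀ u v, d u v ≤ c s(u, v))
    (E : Finset (Sym2 V)) : ∀ σ : Equiv.Perm V, Valid σ → p ≤ numCyc σ →
      (∀ u v, T.Adj u v → s(u, v) ∈ E ∨ σ.SameCycle u v) →
      ∃ σ' : Equiv.Perm V, Valid σ' ∧ numCyc σ' = p ∧ wt d σ' ≤ wt d σ + 2 * ∑ e ∈ E, c e := by
  classical
  induction hn : E.card generalizing E with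
  | zero =>
    intro σ hV hp hE
    rw [Finset.card_eq_zero] at hn
    subst hn
    refine ⟨σ, hV, ?_, by simp⟩
    by_contra hne
    obtain ⟨u, v, huv, hns⟩ : ∃ u v, T.Adj u v ∧ ¬ σ.SameCycle u v := by
      by_contra! hh
      exact hne (le_antisymm (hT ▸ card_le_aux T σ hh) hp)
    simpa [hns] using hE u v huv
  | succ k ih =>
    intro σ hV hp hE
    by_cases hne : numCyc σ = p
    · refine ⟨σ, hV, hne, ?_⟩
      have := Finset.sum_nonneg (fun e (_ : e ∈ E) => hc e)
      linarith
    obtain ⟨u, v, huv, hns⟩ : ∃ u v, T.Adj u v ∧ ¬ σ.SameCycle u v := by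
      by_contra! hh
      exact hne (le_antisymm (hT ▸ card_le_aux T σ hh) hp)
    have heE : s(u, v) ∈ E := (hE u v huv).resolve_right hns
    have hcard := merge_card σ u v hns
    obtain ⟨σ', h1, h2, h3⟩ := ih (E.erase s(u, v)) (by rw [Finset.card_erase_of_mem heE]; omega)
      (σ * Equiv.swap u v) (merge_valid σ u v hns hV) (by omega) (by
        intro a b hab
        by_cases hab' : s(a, b) = s(u, v)
        · right
          have hm := merge_same σ u v hns
          rcases Sym2.eq_iff.1 hab' with ⟨rfl, rfl⟩ | ⟨rfl, rfl⟩
          · exact hm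
          · exact hm.symm
        · rcases hE a b hab with h | h
          · exact .inl (Finset.mem_erase.2 ⟨hab', h⟩)
          · exact .inr ((merge_iff σ u v hns a b).2 (.inl h)))
    refine ⟨σ', h1, h2, h3.trans ?_⟩
    have h4 := merge_weight d hs ht σ u v huv.ne
    have h5 := hdc u v
    rw [← Finset.add_sum_erase E c heE]
    linarith

theorem cycle_perm {V : Type*} [DecidableEq V] (G : SimpleGraph V) {v : V} (w : G.Walk v v)
    (hw : w.IsCycle) :
    ∃ π : Equiv.Perm V, ∀ x ∈ w.support, G.Adj x (π x) ∧ π (π x) ≠ x := by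
  have hnd := hw.support_nodup
  have h3 := hw.three_le_length
  have hlen : w.support.tail.length = w.length := by simp
  have hget : ∀ i (hi : i < w.support.tail.length), w.support.tail[i] = w.getVert (i + 1) := by
    intro i hi
    rw [List.getElem_tail, Walk.support_getElem_eq_getVert]
  refine ⟨w.support.tail.formPerm, fun x hx => ?_⟩
  have hx' : x ∈ w.support.tail := by
    rw [Walk.mem_support_iff] at hx
    rcases hx with rfl | hx
    · exact Walk.end_mem_tail_support hw.not_nil
    · exact hx
  obtain ⟨i, hi, rfl⟩ := List.getElem_of_mem hx'
  rw [List.formPerm_apply_getElem _ hnd, List.formPerm_apply_getElem _ hnd]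
  constructor
  · rw [hget, hget]
    rw [hlen] at hi ⊢
    rcases Nat.lt_or_ge (i + 1) w.length with h | h
    · rw [Nat.mod_eq_of_lt h]; exact w.adj_getVert_succ h
    · have : i + 1 = w.length := by omega
      rw [this, Nat.mod_self, Walk.getVert_length]
      have := w.adj_getVert_succ (i := 0) (by omega)
      rwa [Walk.getVert_zero] at this
  · rw [ne_eq, hnd.getElem_inj_iff, hlen]
    rw [hlen] at hi
    rcases Nat.lt_or_ge (i + 1) w.length with h | h
    · rw [Nat.mod_eq_of_lt h]
      rcases Nat.lt_or_ge (i + 1 + 1) w.length with h' | h'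
      · rw [Nat.mod_eq_of_lt h']; omega
      · have : i + 1 + 1 = w.length := by omega
        rw [this, Nat.mod_self]; omega
    · have : i + 1 = w.length := by omega
      rw [this, Nat.mod_self, Nat.mod_eq_of_lt (by omega)]; omega

theorem twoRegular_perm {V : Type*} [Finite V] (G : SimpleGraph V)
    (hG : ∀ v, (G.neighborSet v).ncard = 2) :
    ∃ σ : Equiv.Perm V, Valid σ ∧ ∀ x, G.Adj x (σ x) := by
  classical
  have hcyc : G.IsCycles := fun v _ => hG v
  have h1 : ∀ C : G.ConnectedComponent, ∃ π : Equiv.Perm V, ∀ x ∈ C.supp,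
      G.Adj x (π x) ∧ π (π x) ≠ x := by
    intro C
    obtain ⟨v, hv⟩ := C.nonempty_supp
    obtain ⟨w, hw, hws⟩ := hcyc.exists_cycle_toSubgraph_verts_eq_connectedComponentSupp hv
      (Set.nonempty_of_ncard_ne_zero (by rw [hG]; norm_num))
    obtain ⟨π, hπ⟩ := cycle_perm G w hw
    refine ⟨π, fun x hx => hπ x ?_⟩
    rwa [← hws, Walk.mem_verts_toSubgraph] at hx
  choose π hπ using h1
  let f : V → V := fun x => π (G.connectedComponentMk x) x
  have hadj : ∀ x, G.Adj x (f x) := fun x => (hπ _ x rfl).1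
  have hcomp : ∀ x, G.connectedComponentMk (f x) = G.connectedComponentMk x := fun x =>
    (ConnectedComponent.connectedComponentMk_eq_of_adj (hadj x)).symm
  have hinj : Function.Injective f := by
    intro x y hxy
    have : G.connectedComponentMk x = G.connectedComponentMk y := by
      rw [← hcomp x, ← hcomp y, hxy]
    simp only [f] at hxy
    rw [this] at hxy
    exact (π _).injective hxy
  refine ⟨Equiv.ofBijective f (Finite.injective_iff_bijective.1 hinj), fun x => ⟨?_, ?_⟩, hadj⟩
  · exact (hadj x).ne'
  · change f (f x) ≠ x
    have := (hπ _ x rfl).2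
    simp only [f] at hcomp ⊢
    rw [hcomp]
    exact this

theorem edge_inj {V : Type*} (σ : Equiv.Perm V) (hV : Valid σ) :
    Function.Injective (fun x => s(x, σ x)) := by
  intro x y hxy
  rcases Sym2.eq_iff.1 hxy with ⟨h, _⟩ | ⟨h, h'⟩
  · exact h
  · exact absurd (by rw [← h, h']) (hV y).2

theorem twoFactor_perm {V : Type*} [Fintype V] (c : Sym2 V → ℝ) (hc : ∀ e, 0 ≤ c e)
    (F : (⊤ : SimpleGraph V).Subgraph) (hF : IsTwoFactor F) :
    ∃ σ : Equiv.Perm V, Valid σ ∧ ∑ x, c s(x, σ x) ≤ subgraphWeight c F := by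
  classical
  obtain ⟨σ, hV, hadj⟩ := twoRegular_perm F.spanningCoe (fun v => hF.2 v)
  refine ⟨σ, hV, ?_⟩
  unfold subgraphWeight
  rw [finsum_mem_eq_finite_toFinset_sum _ (Set.toFinite _),
    ← Finset.sum_image (f := c) (g := fun x => s(x, σ x)) (edge_inj σ hV).injOn]
  refine Finset.sum_le_sum_of_subset_of_nonneg ?_ (fun _ _ _ => hc _)
  intro e he
  obtain ⟨x, -, rfl⟩ := Finset.mem_image.1 he
  simpa using hadj x

theorem perm_graph {V : Type*} [Fintype V] (c : Sym2 V → ℝ) (σ : Equiv.Perm V) (hV : Valid σ) :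
    ∃ H : (⊤ : SimpleGraph V).Subgraph, IsHpMedianSolution (numCyc σ) H ∧
      subgraphWeight c H = ∑ x, c s(x, σ x) := by
  classical
  let H : (⊤ : SimpleGraph V).Subgraph :=
    { verts := Set.univ
      Adj := fun u v => σ u = v ∨ σ v = u
      adj_sub := by
        rintro u v (h | h)
        · rintro rfl; exact (hV u).1 h
        · rintro rfl; exact (hV u).1 h
      edge_vert := fun _ => Set.mem_univ _
      symm := ⟨fun u v h => h.symm⟩ }
  have hsp : H.IsSpanning := fun _ => Set.mem_univ _
  refine ⟨H, ⟨⟨hsp, fun v => ?_⟩, ?_⟩, ?_⟩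
  · have : H.neighborSet v = {σ v, σ⁻¹ v} := by
      ext y
      simp only [Subgraph.mem_neighborSet, H, Set.mem_insert_iff, Set.mem_singleton_iff,
        Equiv.Perm.eq_inv_iff_eq]
      tauto
    rw [this, Set.ncard_pair]
    intro h
    rw [Equiv.Perm.eq_inv_iff_eq] at h
    exact (hV v).2 h
  · rw [Nat.card_congr (Iso.connectedComponentEquiv (H.spanningCoeEquivCoeOfSpanning hsp)).symm]
    apply le_antisymm
    · refine Nat.card_le_card_of_surjective (Quotient.lift
        (fun v => H.spanningCoe.connectedComponentMk v) ?_) ?_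
      · intro a b hab
        refine sameCycle_of_rel σ (fun a b => H.spanningCoe.connectedComponentMk a =
          H.spanningCoe.connectedComponentMk b) ⟨fun _ => rfl, Eq.symm, Eq.trans⟩ ?_ hab
        intro x
        exact ConnectedComponent.connectedComponentMk_eq_of_adj (Or.inl rfl)
      · intro C
        obtain ⟨v, rfl⟩ := C.exists_rep
        exact ⟨Quotient.mk _ v, rfl⟩
    · apply card_le_aux
      rintro u v (h | h)
      · exact ⟨1, by simpa using h⟩
      · exact Equiv.Perm.SameCycle.symm ⟨1, by simpa using h⟩
  · unfold subgraphWeight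
    rw [finsum_mem_eq_finite_toFinset_sum _ (Set.toFinite _),
      ← Finset.sum_image (f := c) (g := fun x => s(x, σ x)) (edge_inj σ hV).injOn]
    refine Finset.sum_congr ?_ fun _ _ => rfl
    ext e
    induction e with | _ a b
    simp only [Set.Finite.mem_toFinset, Subgraph.mem_edgeSet, Finset.mem_image, Finset.mem_univ,
      true_and, Sym2.eq_iff, H]
    constructor
    · rintro (h | h)
      · exact ⟨a, .inl ⟨rfl, h⟩⟩
      · exact ⟨b, .inr ⟨rfl, h⟩⟩
    · rintro ⟨x, ⟨rfl, h⟩ | ⟨rfl, h⟩⟩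
      · exact .inl h
      · exact .inr h

/-- in a complete graph on `n` vertices with nonnegative weights
satisfying the triangle inequality, if `1 ≤ p ≤ ⌈(n - 2⌈n/5⌉)/3⌉`, `μ₂` is the minimum
weight of a 2-factor and `μT` is the minimum weight of a spanning forest with exactly
`p` components, then there is a Hamiltonian `p`-median solution of weight at most
`max (2μ₂) (μ₂ + 2μT)`. -/
theorem approximation_guarantee {V : Type*} [Fintype V] (n : ℕ) (hn : Fintype.card V = n)
    (c : Sym2 V → ℝ) (hc : ∀ e, 0 ≤ c e)
    (htri : ∀ u v x : V, u ≠ v → v ≠ x → u ≠ x → c s(u, x) ≤ c s(u, v) + c s(v, x))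
    (p : ℕ) (hp1 : 1 ≤ p) (hpb : (p : ℤ) ≤ ⌈((n : ℚ) - 2 * (⌈(n : ℚ) / 5⌉ : ℚ)) / 3⌉)
    (μ₂ μT : ℝ)
    (hμ₂ : IsLeast {x | ∃ F : (⊤ : SimpleGraph V).Subgraph, IsTwoFactor F ∧
      subgraphWeight c F = x} μ₂)
    (hμT : IsLeast {x | ∃ T : (⊤ : SimpleGraph V).Subgraph, T.IsSpanning ∧
      T.coe.IsAcyclic ∧ Nat.card T.coe.ConnectedComponent = p ∧
      subgraphWeight c T = x} μT) :
    ∃ H : (⊤ : SimpleGraph V).Subgraph, IsHpMedianSolution p H ∧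
      subgraphWeight c H ≤ max (2 * μ₂) (μ₂ + 2 * μT) := by
  classical
  obtain ⟨⟨F, hF, hFw⟩, -⟩ := hμ₂
  obtain ⟨⟨T, hTs, -, hTc, hTw⟩, -⟩ := hμT
  obtain ⟨σ₀, hV₀, hw₀⟩ := twoFactor_perm c hc F hF
  rw [hFw] at hw₀
  let d : V → V → ℝ := fun x y => if x = y then 0 else c s(x, y)
  have h0 : ∀ x, d x x = 0 := fun x => by simp [d]
  have hs : ∀ x y, d x y = d y x := fun x y => by simp [d, eq_comm, Sym2.eq_swap]
  have hnn : ∀ x y, 0 ≤ d x y := fun x y => by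
    simp only [d]; split_ifs
    · exact le_rfl
    · exact hc _
  have hdne : ∀ x y, x ≠ y → d x y = c s(x, y) := fun x y h => by simp [d, h]
  have hdc : ∀ x y, d x y ≤ c s(x, y) := fun x y => by
    simp only [d]; split_ifs
    · exact hc _
    · exact le_rfl
  have ht : ∀ x y z, d x z ≤ d x y + d y z := by
    intro x y z
    by_cases hxz : x = z
    · subst hxz; rw [h0]; exact add_nonneg (hnn _ _) (hnn _ _)
    by_cases hxy : x = y
    · subst hxy; rw [h0]; linarith
    by_cases hyz : y = z
    · subst hyz; rw [h0]; linarith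
    rw [hdne _ _ hxz, hdne _ _ hxy, hdne _ _ hyz]
    exact htri x y z hxy hyz hxz
  have hwt : ∀ σ : Equiv.Perm V, Valid σ → wt d σ = ∑ x, c s(x, σ x) := fun σ hσ =>
    Finset.sum_congr rfl fun x _ => hdne _ _ (hσ x).1.symm
  rw [← hwt σ₀ hV₀] at hw₀
  have hp5 : (p - 1) * 5 < Fintype.card V := by
    rw [hn]
    have h1 : ((p : ℤ) - 1 : ℤ) < ⌈((n : ℚ) - 2 * (⌈(n : ℚ) / 5⌉ : ℚ)) / 3⌉ := by omega
    rw [Int.lt_ceil] at h1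
    have h2 := Int.le_ceil ((n : ℚ) / 5)
    push_cast at h1
    have h3 : ((p : ℚ) - 1) * 5 < n := by linarith
    have h4 : (((p - 1 : ℕ) : ℚ)) * 5 < n := by rw [Nat.cast_sub hp1]; simpa using h3
    exact_mod_cast h4
  suffices h : ∃ σ : Equiv.Perm V, Valid σ ∧ numCyc σ = p ∧
      wt d σ ≤ max (2 * μ₂) (μ₂ + 2 * μT) by
    obtain ⟨σ, hV, hp, hw⟩ := h
    obtain ⟨H, hH, hHw⟩ := perm_graph c σ hV
    refine ⟨H, hp ▸ hH, ?_⟩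
    rw [hHw, ← hwt σ hV]
    exact hw
  rcases Nat.lt_or_ge (numCyc σ₀) p with hlt | hge
  · obtain ⟨σ, B, hV, hp, hB, hB'⟩ := split_all σ₀ p hp5 hp1 (p - numCyc σ₀) σ₀ ∅ hV₀ (by omega)
      (fun _ _ => rfl) (fun x hx => absurd hx (Set.notMem_empty x))
    refine ⟨σ, hV, hp, le_max_of_le_left ?_⟩
    have := split_weight d h0 hs hnn ht σ₀ σ B hB hB'
    linarith
  · have hT' : Nat.card T.spanningCoe.ConnectedComponent = p := by
      rw [← hTc]
      exact Nat.card_congr (Iso.connectedComponentEquiv (T.spanningCoeEquivCoeOfSpanning hTs))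
    obtain ⟨σ, hV, hp, hw⟩ := merge_all_s14 d hs ht T.spanningCoe p hT' c hc hdc
      (Set.toFinite T.edgeSet).toFinset σ₀ hV₀ hge (fun u v huv => .inl (by simpa using huv))
    refine ⟨σ, hV, hp, le_max_of_le_right ?_⟩
    unfold subgraphWeight at hTw
    rw [finsum_mem_eq_finite_toFinset_sum _ (Set.toFinite _)] at hTw
    rw [hTw] at hw
    linarith
end
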